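/- arXiv:2404.00259 — 3 statements merged into one kernel-verified Lean document; each statement's English description precedes it below -/
import Mathlib

section
/- Let M be a von Neumann algebra on H, let G be a countable family of pairwise commuting projections in M, and let Z be a countable family of projections in the centre Z(M) with 1 ∈ Z. Let A = C*(G ∪ Z) and B = C*(Z) be the unital C*-subalgebras of M generated by G ∪ Z and by Z, respectively. Then there exists a sequence (ψ_k)_{k∈ℕ} of unital *-homomorphisms ψ_k : A → Z(M) such that: (i) ψ_k(b) = b for every b ∈ B and every k; (ii) for every nonzero a ∈ A there exists k with ψ_k(a) ≠ 0; (iii) for every p ∈ G, p ≤ ⋁_{k∈ℕ} ψ_k(p), where ⋁_{k∈ℕ} ψ_k(p) is the supremum of the pairwise commuting central projections ψ_k(p), i.e., the strong-operator limit of the increasing sequence of finite suprema ⋁_{k≤m} ψ_k(p). -/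
open ContinuousLinearMap Filter Topology

noncomputable section

namespace VNA

variable {H : Type*} [NormedAddCommGroup H] [InnerProductSpace ℂ H] [CompleteSpace H]

/-- A projection (orthogonal projection): idempotent and self-adjoint. -/
def IsProjection (p : H →L[ℂ] H) : Prop := p * p = p ∧ star p = p

/-- Murray–von Neumann equivalence of `p` and `q` relative to `M`. -/
def MvNE (M : VonNeumannAlgebra H) (p q : H →L[ℂ] H) : Prop :=
  ∃ v ∈ M, star v * v = p ∧ v * star v = q

/-- `p` is a finite projection of `M`; for projections, `q ≤ p` is the range
containment `p * q = q`. -/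
def IsFiniteProjection (M : VonNeumannAlgebra H) (p : H →L[ℂ] H) : Prop :=
  p ∈ M ∧ IsProjection p ∧
    ∀ q, q ∈ M → IsProjection q → p * q = q → MvNE M q p → q = p

def IsInfiniteProjection (M : VonNeumannAlgebra H) (p : H →L[ℂ] H) : Prop :=
  p ∈ M ∧ IsProjection p ∧ ¬ IsFiniteProjection M p

/-- The centre `Z(M) = M ∩ M'` as a set. -/
def centerSet (M : VonNeumannAlgebra H) : Set (H →L[ℂ] H) :=
  {z | z ∈ M ∧ ∀ y ∈ M, z * y = y * z}

def IsCentralProjection (M : VonNeumannAlgebra H) (z : H →L[ℂ] H) : Prop :=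
  IsProjection z ∧ z ∈ centerSet M

def IsProperlyInfiniteProjection (M : VonNeumannAlgebra H) (p : H →L[ℂ] H) : Prop :=
  p ∈ M ∧ IsProjection p ∧
    ∀ z, IsCentralProjection M z → z * p ≠ 0 → IsInfiniteProjection M (z * p)

def ProperlyInfinite (M : VonNeumannAlgebra H) : Prop :=
  IsProperlyInfiniteProjection M 1

/-- `M` is σ-finite: every family of pairwise orthogonal nonzero projections in `M`
is countable. -/
def SigmaFinite (M : VonNeumannAlgebra H) : Prop :=
  ∀ S : Set (H →L[ℂ] H), (∀ p ∈ S, p ∈ M ∧ IsProjection p ∧ p ≠ 0) →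
    (∀ p ∈ S, ∀ q ∈ S, p ≠ q → p * q = 0) → S.Countable

/-- A faithful normal semifinite trace on `M`. -/
structure IsFNSTrace (M : VonNeumannAlgebra H) (τ : (H →L[ℂ] H) → ENNReal) : Prop where
  map_zero : τ 0 = 0
  additive : ∀ x y : H →L[ℂ] H, x ∈ M → y ∈ M → 0 ≤ x → 0 ≤ y → τ (x + y) = τ x + τ y
  homogeneous : ∀ (c : ℝ) (x : H →L[ℂ] H), 0 ≤ c → x ∈ M → 0 ≤ x →
    τ (c • x) = ENNReal.ofReal c * τ x
  tracial : ∀ x : H →L[ℂ] H, x ∈ M → τ (star x * x) = τ (x * star x)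
  faithful : ∀ x : H →L[ℂ] H, x ∈ M → 0 ≤ x → τ x = 0 → x = 0
  normal : ∀ (ι : Type*) [Preorder ι] [IsDirected ι (· ≤ ·)] [Nonempty ι]
      (f : ι → (H →L[ℂ] H)) (x : H →L[ℂ] H),
      (∀ i, f i ∈ M) → (∀ i, 0 ≤ f i) → Monotone f → (∃ C : ℝ, ∀ i, ‖f i‖ ≤ C) →
      x ∈ M → IsLUB (Set.range f) x → τ x = ⨆ i, τ (f i)
  semifinite : ∀ x : H →L[ℂ] H, x ∈ M → 0 ≤ x → x ≠ 0 →
      ∃ y, y ∈ M ∧ 0 ≤ y ∧ y ≤ x ∧ y ≠ 0 ∧ τ y < ⊤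

/-- `p` is a `τ`-finite projection of `M`. -/
def IsTauFiniteProjection (M : VonNeumannAlgebra H) (τ : (H →L[ℂ] H) → ENNReal)
    (p : H →L[ℂ] H) : Prop :=
  p ∈ M ∧ IsProjection p ∧ τ p < ⊤

/-- `F₁⁺(M) = {x ∈ M : 0 ≤ x ≤ 1, px = x for some τ-finite projection p}`. -/
def F1plus (M : VonNeumannAlgebra H) (τ : (H →L[ℂ] H) → ENNReal) : Set (H →L[ℂ] H) :=
  {x | x ∈ M ∧ 0 ≤ x ∧ x ≤ 1 ∧ ∃ p, IsTauFiniteProjection M τ p ∧ p * x = x}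

/-- `K(M,τ)`: operator-norm closure of the τ-finitely supported elements of `M`. -/
def Kideal (M : VonNeumannAlgebra H) (τ : (H →L[ℂ] H) → ENNReal) : Set (H →L[ℂ] H) :=
  closure {x | x ∈ M ∧ ∃ p, IsTauFiniteProjection M τ p ∧ p * x = x}

/-- A commuting self-adjoint `n`-tuple in `M`. -/
def IsCommutingSelfAdjointTuple (M : VonNeumannAlgebra H) {n : ℕ}
    (α : Fin n → (H →L[ℂ] H)) : Prop :=
  (∀ j, α j ∈ M) ∧ (∀ j, star (α j) = α j) ∧ ∀ i j, α i * α j = α j * α i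

/-- `‖[r,α]‖ = max_{1≤j≤n} ‖[r, α(j)]‖`. -/
def commNorm {n : ℕ} (α : Fin n → (H →L[ℂ] H)) (r : H →L[ℂ] H) : ℝ :=
  ⨆ j, ‖r * α j - α j * r‖

/-- `WZ*(S)`: the double commutant in `B(H)` of `S ∪ Z(M)`. -/
def WZstar (M : VonNeumannAlgebra H) (S : Set (H →L[ℂ] H)) : Set (H →L[ℂ] H) :=
  Set.centralizer (Set.centralizer (S ∪ centerSet M))

/-- A diagonal operator of `M`: `d = Σ_k λ_k p_k` with pairwise orthogonal
projections `p_k ∈ M`, the series converging in the strong operator topology. -/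
def IsDiagonal (M : VonNeumannAlgebra H) (d : H →L[ℂ] H) : Prop :=
  ∃ (p : ℕ → H →L[ℂ] H) (lam : ℕ → ℂ),
    (∀ k, p k ∈ M) ∧ (∀ k, IsProjection (p k)) ∧
    (∀ k l, k ≠ l → p k * p l = 0) ∧
    ∀ ξ : H, HasSum (fun k => lam k • (p k ξ)) (d ξ)

end VNA

namespace VNA

variable {H : Type*} [NormedAddCommGroup H] [InnerProductSpace ℂ H] [CompleteSpace H]

/-- The unital C*-subalgebra of `B(H)` generated by a set `S`. -/
def CstarGen (S : Set (H →L[ℂ] H)) : StarSubalgebra ℂ (H →L[ℂ] H) :=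
  (StarAlgebra.adjoin ℂ S).topologicalClosure

/-- Finite suprema `⋁_{k ≤ m} f k` of a sequence of pairwise commuting projections,
using `e ∨ f = e + f - e f`. -/
def projSupSeq (f : ℕ → (H →L[ℂ] H)) : ℕ → (H →L[ℂ] H)
  | 0 => f 0
  | m + 1 => projSupSeq f m + f (m + 1) - projSupSeq f m * f (m + 1)

end VNA


namespace VNA

variable {H : Type*} [NormedAddCommGroup H] [InnerProductSpace ℂ H] [CompleteSpace H]

theorem exists_central_support (M : VonNeumannAlgebra H) (q : H →L[ℂ] H) (hq : q ∈ M) :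
    ∃ c, IsProjection c ∧ c ∈ centerSet M ∧ c * q = q ∧
      ∀ z ∈ centerSet M, z * q = 0 → z * c = 0 := by
  let S : Set H := {x | ∃ m ∈ M, ∃ ξ, x = m (q ξ)}
  let K : Submodule ℂ H := (Submodule.span ℂ S).topologicalClosure
  have hK : IsClosed (K : Set H) := Submodule.isClosed_topologicalClosure _
  have : CompleteSpace K := hK.completeSpace_coe
  have hle : Submodule.span ℂ S ≤ K := Submodule.le_topologicalClosure _
  -- invariance criterion
  have hinv : ∀ y : H →L[ℂ] H, (∀ x ∈ S, y x ∈ S) → ∀ x ∈ K, y x ∈ K := by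
    intro y hy x hx
    have h1 : Submodule.span ℂ S ≤ K.comap (y : H →ₗ[ℂ] H) := by
      rw [Submodule.span_le]
      intro x hx
      exact hle (Submodule.subset_span (hy x hx))
    have h2 : K ≤ K.comap (y : H →ₗ[ℂ] H) := by
      refine Submodule.topologicalClosure_minimal _ h1 ?_
      exact hK.preimage y.continuous
    exact h2 hx
  have hker : ∀ y : H →L[ℂ] H, (∀ x ∈ S, y x = 0) → ∀ x ∈ K, y x = 0 := by
    intro y hy x hx
    have h1 : Submodule.span ℂ S ≤ LinearMap.ker (y : H →ₗ[ℂ] H) := by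
      rw [Submodule.span_le]
      intro x hx
      exact hy x hx
    have h2 : K ≤ LinearMap.ker (y : H →ₗ[ℂ] H) := by
      refine Submodule.topologicalClosure_minimal _ h1 ?_
      exact isClosed_singleton.preimage y.continuous
    exact h2 hx
  have hproj : IsStarProjection K.starProjection := isStarProjection_starProjection
  have hM : K.starProjection ∈ M := by
    rw [VonNeumannAlgebra.IsStarProjection.mem_iff hproj]
    intro y hy
    rw [Submodule.range_starProjection]
    intro x hx
    refine hinv y ?_ x hx
    rintro _ ⟨m, hm, ξ, rfl⟩
    rw [VonNeumannAlgebra.mem_commutant_iff] at hy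
    refine ⟨m, hm, y ξ, ?_⟩
    have e1 : m (y (q ξ)) = y (m (q ξ)) := DFunLike.congr_fun (hy m hm) (q ξ)
    have e2 : q (y ξ) = y (q ξ) := DFunLike.congr_fun (hy q hq) ξ
    rw [e2, e1]
  have hM' : K.starProjection ∈ M.commutant := by
    rw [VonNeumannAlgebra.IsStarProjection.mem_iff hproj]
    intro y hy
    rw [VonNeumannAlgebra.commutant_commutant] at hy
    rw [Submodule.range_starProjection]
    intro x hx
    refine hinv y ?_ x hx
    rintro _ ⟨m, hm, ξ, rfl⟩
    exact ⟨y * m, mul_mem hy hm, ξ, rfl⟩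
  refine ⟨K.starProjection, ⟨hproj.isIdempotentElem, hproj.isSelfAdjoint⟩, ⟨hM, ?_⟩, ?_, ?_⟩
  · intro y hy
    exact (VonNeumannAlgebra.mem_commutant_iff.1 hM' y hy).symm
  · ext ξ
    change K.starProjection (q ξ) = q ξ
    rw [Submodule.starProjection_eq_self_iff]
    exact hle (Submodule.subset_span ⟨1, one_mem M, ξ, rfl⟩)
  · intro z hz hzq
    ext ξ
    change z (K.starProjection ξ) = 0
    refine hker z ?_ _ (Submodule.starProjection_apply_mem _ _)
    rintro _ ⟨m, hm, η, rfl⟩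
    have e1 : z (m (q η)) = m (z (q η)) := DFunLike.congr_fun (hz.2 m hm) (q η)
    have e2 : z (q η) = 0 := DFunLike.congr_fun hzq η
    rw [e1, e2, map_zero]

/-- The centre as a star subalgebra. -/
def ctr (M : VonNeumannAlgebra H) : StarSubalgebra ℂ (H →L[ℂ] H) :=
  M.toStarSubalgebra ⊓ M.commutant.toStarSubalgebra

theorem mem_ctr {M : VonNeumannAlgebra H} {z : H →L[ℂ] H} : z ∈ ctr M ↔ z ∈ centerSet M := by
  have : z ∈ ctr M ↔ z ∈ M ∧ z ∈ M.commutant := Iff.rfl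
  rw [this, VonNeumannAlgebra.mem_commutant_iff]
  exact and_congr_right fun _ => forall₂_congr fun _ _ => eq_comm

theorem isClosed_vna (M : VonNeumannAlgebra H) : IsClosed (M : Set (H →L[ℂ] H)) := by
  rw [← M.centralizer_centralizer]
  exact Set.isClosed_centralizer _

theorem isClosed_ctr (M : VonNeumannAlgebra H) : IsClosed (ctr M : Set (H →L[ℂ] H)) :=
  (isClosed_vna M).inter (isClosed_vna M.commutant)

/-- Multiplication by a full projection is isometric on the centre. -/
theorem norm_mul_of_full (M : VonNeumannAlgebra H) (f : H →L[ℂ] H) (hfM : f ∈ M)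
    (hf : IsProjection f) (hfull : ∀ z ∈ ctr M, z * f = 0 → z = 0)
    (b : H →L[ℂ] H) (hb : b ∈ ctr M) : ‖b * f‖ = ‖b‖ := by
  have : IsClosed (ctr M : Set (H →L[ℂ] H)) := isClosed_ctr M
  let φ : ctr M →⋆ₙₐ[ℂ] (H →L[ℂ] H) :=
    { toFun := fun x => (x : H →L[ℂ] H) * f
      map_smul' := fun c x => by simp
      map_zero' := by simp
      map_add' := fun x y => by simp [add_mul]
      map_mul' := fun x y => by
        have h1 : (y : H →L[ℂ] H) * f = f * y := (mem_ctr.1 y.2).2 f hfM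
        simp only [MulMemClass.coe_mul]
        rw [mul_assoc (x : H →L[ℂ] H) f, ← mul_assoc f, ← h1, mul_assoc (y : H →L[ℂ] H) f f, hf.1,
          mul_assoc]
      map_star' := fun x => by
        have h1 : (x : H →L[ℂ] H) * f = f * x := (mem_ctr.1 x.2).2 f hfM
        rw [h1, star_mul, hf.2]; rfl }
  have hinj : Function.Injective φ := by
    intro x y hxy
    have : ((x - y : ctr M) : H →L[ℂ] H) * f = 0 := by
      have : (x : H →L[ℂ] H) * f = y * f := hxy
      simp [sub_mul, this]
    have h0 := hfull _ (x - y).2 this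
    exact sub_eq_zero.1 (Subtype.ext h0)
  exact NonUnitalStarAlgHom.norm_map φ hinj ⟨b, hb⟩

theorem norm_split (x g : H →L[ℂ] H) (hg : IsProjection g) (hc : x * g = g * x) :
    ‖x * g‖ = ‖x‖ ∨ ‖x * (1 - g)‖ = ‖x‖ := by
  have hc' : star x * g = g * star x := by
    have := congrArg star hc
    simpa [hg.2] using this.symm
  have hg' : g * (1 - g) = 0 := by rw [mul_sub, hg.1, mul_one, sub_self]
  have hs : ∀ p : H →L[ℂ] H, IsProjection p → x * p = p * x → star x * p = p * star x →
      star (x * p) * (x * p) = star x * x * p := by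
    intro p hp h1 h2
    rw [star_mul, hp.2, ← h2, mul_assoc (star x) p, ← mul_assoc p, ← h1, mul_assoc x p p, hp.1,
      mul_assoc]
  have h1g : IsProjection (1 - g) := by
    constructor
    · rw [sub_mul, hg', one_mul, sub_zero]
    · rw [star_sub, star_one, hg.2]
  have e1 := hs g hg hc hc'
  have e2 := hs (1 - g) h1g (by rw [mul_sub, sub_mul, hc, mul_one, one_mul])
    (by rw [mul_sub, sub_mul, hc', mul_one, one_mul])
  have hcc : star x * x * g = g * (star x * x) := by
    rw [mul_assoc, hc, ← mul_assoc, hc', mul_assoc]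
  have z1 : star x * x * g * (star x * x * (1 - g)) = 0 := by
    rw [hcc, mul_sub, mul_one, hcc]
    have : g * (star x * x) * (g * (star x * x)) = g * (star x * x) * (star x * x) := by
      rw [← mul_assoc, ← hcc, mul_assoc _ g g, hg.1]
    rw [mul_sub, this, sub_self]
  have z2 : star x * x * (1 - g) * (star x * x * g) = 0 := by
    have h0 : (1 - g) * g = 0 := by rw [sub_mul, one_mul, hg.1, sub_self]
    rw [hcc, ← mul_assoc, mul_assoc _ (1 - g) g, h0, mul_zero, zero_mul]
  have n1 : IsStarNormal (star x * x * g) := by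
    rw [← e1]; exact (IsSelfAdjoint.star_mul_self _).isStarNormal
  have n2 : IsStarNormal (star x * x * (1 - g)) := by
    rw [← e2]; exact (IsSelfAdjoint.star_mul_self _).isStarNormal
  have hm := n1.norm_add_eq_max n2 (z1.trans z2.symm) z1
  rw [← mul_add, add_sub_cancel, mul_one, ← e1, ← e2, CStarRing.norm_star_mul_self,
    CStarRing.norm_star_mul_self, CStarRing.norm_star_mul_self] at hm
  rcases max_choice (‖x * g‖ * ‖x * g‖) (‖x * (1 - g)‖ * ‖x * (1 - g)‖) with h | h
  · left
    rw [h] at hm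
    exact ((mul_self_inj (norm_nonneg x) (norm_nonneg _)).1 hm).symm
  · right
    rw [h] at hm
    exact ((mul_self_inj (norm_nonneg x) (norm_nonneg _)).1 hm).symm

end VNA

namespace VNA

variable {H : Type*} [NormedAddCommGroup H] [InnerProductSpace ℂ H] [CompleteSpace H]

/-- Elements of `M` commuting with `G`. -/
def cG (M : VonNeumannAlgebra H) (G : Set (H →L[ℂ] H)) : StarSubalgebra ℂ (H →L[ℂ] H) :=
  M.toStarSubalgebra ⊓ StarSubalgebra.centralizer ℂ G

theorem isClosed_cG (M : VonNeumannAlgebra H) (G : Set (H →L[ℂ] H)) :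
    IsClosed (cG M G : Set (H →L[ℂ] H)) := by
  refine (isClosed_vna M).inter ?_
  exact Set.isClosed_centralizer _

theorem cG_mem {M : VonNeumannAlgebra H} {G : Set (H →L[ℂ] H)} {x : H →L[ℂ] H}
    (hx : x ∈ cG M G) : x ∈ M := hx.1

theorem mem_cG {M : VonNeumannAlgebra H} {G : Set (H →L[ℂ] H)}
    (hG : ∀ p ∈ G, IsProjection p) {x : H →L[ℂ] H} :
    x ∈ cG M G ↔ x ∈ M ∧ ∀ p ∈ G, p * x = x * p := by
  have : x ∈ cG M G ↔ x ∈ M ∧ x ∈ StarSubalgebra.centralizer ℂ G := Iff.rfl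
  rw [this, StarSubalgebra.mem_centralizer_iff]
  refine and_congr_right fun _ => forall₂_congr fun p hp => ?_
  rw [(hG p hp).2, and_self]

/-- Projections in `M`, commuting with `G` and with everything which commutes with `G`. -/
structure Nice (M : VonNeumannAlgebra H) (G : Set (H →L[ℂ] H)) (q : H →L[ℂ] H) : Prop where
  proj : IsProjection q
  mem : q ∈ cG M G
  comm : ∀ x ∈ cG M G, x * q = q * x

variable {M : VonNeumannAlgebra H} {G : Set (H →L[ℂ] H)}

theorem Nice.one : Nice M G 1 :=
  ⟨⟨one_mul _, star_one _⟩, one_mem _, fun x _ => by rw [one_mul, mul_one]⟩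

theorem Nice.compl {q : H →L[ℂ] H} (hq : Nice M G q) : Nice M G (1 - q) := by
  refine ⟨⟨?_, ?_⟩, sub_mem (one_mem _) hq.mem, fun x hx => ?_⟩
  · rw [sub_mul, mul_sub q, hq.proj.1]; simp
  · rw [star_sub, star_one, hq.proj.2]
  · rw [mul_sub, sub_mul, hq.comm x hx, one_mul, mul_one]

theorem Nice.mul {p q : H →L[ℂ] H} (hp : Nice M G p) (hq : Nice M G q) : Nice M G (p * q) := by
  refine ⟨⟨?_, ?_⟩, mul_mem hp.mem hq.mem, fun x hx => ?_⟩
  · rw [mul_assoc p q, ← mul_assoc q, hp.comm q hq.mem, mul_assoc p q q, hq.proj.1, ← mul_assoc,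
      hp.proj.1]
  · rw [star_mul, hq.proj.2, hp.proj.2, hp.comm q hq.mem]
  · rw [← mul_assoc, hp.comm x hx, mul_assoc, hq.comm x hx, mul_assoc]

theorem Nice.add {p q : H →L[ℂ] H} (hp : Nice M G p) (hq : Nice M G q) (h : p * q = 0) :
    Nice M G (p + q) := by
  have h' : q * p = 0 := by rw [hp.comm q hq.mem, h]
  refine ⟨⟨?_, ?_⟩, add_mem hp.mem hq.mem, fun x hx => ?_⟩
  · rw [mul_add, add_mul, add_mul, h, h', hp.proj.1, hq.proj.1]; simp
  · rw [star_add, hq.proj.2, hp.proj.2]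
  · rw [mul_add, add_mul, hp.comm x hx, hq.comm x hx]

theorem Nice.of_ctr (hG : ∀ p ∈ G, p ∈ M ∧ IsProjection p) {c : H →L[ℂ] H}
    (hc : IsProjection c) (hc' : c ∈ ctr M) : Nice M G c := by
  have h2 := mem_ctr.1 hc'
  refine ⟨hc, ?_, fun x hx => (h2.2 x (cG_mem hx)).symm⟩
  rw [mem_cG (fun p hp => (hG p hp).2)]
  exact ⟨h2.1, fun p hp => (h2.2 p (hG p hp).1).symm⟩

theorem Nice.of_mem (hG : ∀ p ∈ G, p ∈ M ∧ IsProjection p)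
    (hGcomm : ∀ p ∈ G, ∀ q ∈ G, p * q = q * p) {p : H →L[ℂ] H} (hp : p ∈ G) : Nice M G p := by
  have hG' : ∀ p ∈ G, IsProjection p := fun p hp => (hG p hp).2
  refine ⟨(hG p hp).2, ?_, fun x hx => ?_⟩
  · rw [mem_cG hG']
    exact ⟨(hG p hp).1, fun q hq => hGcomm q hq p hp⟩
  · rw [mem_cG hG'] at hx
    exact (hx.2 p hp).symm

theorem ctr_le_cG (hG : ∀ p ∈ G, p ∈ M ∧ IsProjection p) {b : H →L[ℂ] H} (hb : b ∈ ctr M) :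
    b ∈ cG M G := by
  have h2 := mem_ctr.1 hb
  rw [mem_cG (fun p hp => (hG p hp).2)]
  exact ⟨h2.1, fun p hp => (h2.2 p (hG p hp).1).symm⟩

/-- Full nice projections: central support one. -/
structure Good (M : VonNeumannAlgebra H) (G : Set (H →L[ℂ] H)) (f : H →L[ℂ] H) : Prop
    extends Nice M G f where
  full : ∀ z ∈ ctr M, z * f = 0 → z = 0

theorem IsProjection.norm_le {q : H →L[ℂ] H} (hq : IsProjection q) : ‖q‖ ≤ 1 := by
  have h : ‖q‖ * ‖q‖ = ‖q‖ := by
    rw [← CStarRing.norm_star_mul_self, hq.2, hq.1]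
  nlinarith [norm_nonneg q, sq_nonneg (‖q‖ - 1)]

theorem good_start (hG : ∀ p ∈ G, p ∈ M ∧ IsProjection p) {q : H →L[ℂ] H} (hq : Nice M G q) :
    ∃ f c, Good M G f ∧ c ∈ ctr M ∧ c * q = q ∧ (q - c) * f = 0 ∧ IsProjection c := by
  obtain ⟨c, hcp, hc, hcq, hmin⟩ := exists_central_support M q (cG_mem hq.mem)
  have hc' := mem_ctr.2 hc
  have hcN : Nice M G c := Nice.of_ctr hG hcp hc'
  have hqc : q * c = q := by rw [hcN.comm q hq.mem, hcq]
  have h0 : q * (1 - c) = 0 := by rw [mul_sub, hqc, mul_one, sub_self]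
  refine ⟨q + (1 - c), c, ⟨hq.add hcN.compl h0, ?_⟩, hc', hcq, ?_, hcp⟩
  · intro z hz hzf
    have e1 : z * q = 0 := by
      have := congrArg (· * q) hzf
      simp only [zero_mul] at this
      rwa [mul_assoc, add_mul, hq.proj.1, sub_mul, one_mul, hcq, sub_self, add_zero] at this
    have e2 := hmin z (mem_ctr.1 hz) e1
    rw [mul_add, e1, mul_sub, e2, mul_one, sub_zero, zero_add] at hzf
    exact hzf
  · rw [sub_mul, mul_add, mul_add, h0, hq.proj.1, hcq, mul_sub, hcp.1, mul_one, sub_self]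
    simp

theorem good_step (hG : ∀ p ∈ G, p ∈ M ∧ IsProjection p) {f g : H →L[ℂ] H}
    (hf : Good M G f) (hg : Nice M G g) :
    ∃ f', Good M G f' ∧ f * f' = f' ∧ ∃ e ∈ ctr M, (g - e) * f' = 0 := by
  obtain ⟨e, hep, he, hefg, hmin⟩ := exists_central_support M (f * g)
    (mul_mem (cG_mem hf.mem) (cG_mem hg.mem))
  have he' := mem_ctr.2 he
  have heN : Nice M G e := Nice.of_ctr hG hep he'
  have hgg : g * (1 - g) = 0 := by rw [mul_sub, hg.proj.1, mul_one, sub_self]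
  have hgg' : (1 - g) * g = 0 := by rw [sub_mul, hg.proj.1, one_mul, sub_self]
  have hee : e * (1 - e) = 0 := by rw [mul_sub, hep.1, mul_one, sub_self]
  have heg : g * e = e * g := heN.comm g hg.mem
  have hfe : f * e = e * f := heN.comm f hf.mem
  have h0 : (e * g) * ((1 - e) * (1 - g)) = 0 := by
    rw [mul_assoc, ← mul_assoc g, heN.compl.comm g hg.mem, mul_assoc (1 - e), hgg]; simp
  have hN : Nice M G (e * g + (1 - e) * (1 - g)) :=
    (heN.mul hg).add (heN.compl.mul hg.compl) h0
  have hgh : (g - e) * (e * g + (1 - e) * (1 - g)) = 0 := by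
    have a1 : g * (e * g) = e * g := by rw [← mul_assoc, heg, mul_assoc, hg.proj.1]
    have a2 : e * (e * g) = e * g := by rw [← mul_assoc, hep.1]
    have a3 : g * ((1 - e) * (1 - g)) = 0 := by
      rw [← mul_assoc, heN.compl.comm g hg.mem, mul_assoc, hgg, mul_zero]
    have a4 : e * ((1 - e) * (1 - g)) = 0 := by rw [← mul_assoc, hee, zero_mul]
    rw [sub_mul, mul_add, mul_add, a1, a2, a3, a4, sub_self]
  refine ⟨f * (e * g + (1 - e) * (1 - g)), ⟨hf.toNice.mul hN, ?_⟩, ?_, e, he', ?_⟩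
  · intro z hz hzf
    have e1 : z * (f * g) = 0 := by
      have := congrArg (· * g) hzf
      simp only [zero_mul] at this
      rwa [mul_assoc, mul_assoc, add_mul, mul_assoc, mul_assoc, hgg', hg.proj.1, mul_zero, add_zero,
        ← mul_assoc f, hfe, mul_assoc e, hefg] at this
    have e2 : z * e = 0 := hmin z (mem_ctr.1 hz) e1
    have e3 : z * (f * (e * g)) = 0 := by rw [← mul_assoc f, hfe, ← mul_assoc, ← mul_assoc, e2]; simp
    have e4 : z * (f * ((1 - e) * (1 - g))) = z * f := by
      have : z * (f * (1 - e)) = z * f := by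
        rw [mul_sub, hfe, mul_one, mul_sub, ← mul_assoc z e, e2]; simp
      rw [← mul_assoc f, ← mul_assoc, this, mul_sub, mul_one, mul_assoc, e1, sub_zero]
    rw [mul_add, mul_add, e3, e4, zero_add] at hzf
    exact hf.full z hz hzf
  · rw [← mul_assoc, hf.proj.1]
  · rw [← mul_assoc, hf.comm (g - e) (sub_mem hg.mem heN.mem), mul_assoc, hgh, mul_zero]

theorem good_seq (hG : ∀ p ∈ G, p ∈ M ∧ IsProjection p) {f₀ : H →L[ℂ] H}
    (hf : Good M G f₀) (g : ℕ → H →L[ℂ] H) (hg : ∀ n, Nice M G (g n)) :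
    ∃ f : ℕ → H →L[ℂ] H, f 0 = f₀ ∧ (∀ n, Good M G (f n)) ∧
      (∀ m n, m ≤ n → f m * f n = f n) ∧ ∀ n, ∃ e ∈ ctr M, (g n - e) * f (n + 1) = 0 := by
  choose F hF1 hF2 hF3 using fun (f : {f // Good M G f}) n => good_step hG f.2 (hg n)
  let s : ℕ → {f // Good M G f} := fun n => Nat.rec ⟨f₀, hf⟩ (fun n f => ⟨F f n, hF1 f n⟩) n
  refine ⟨fun n => (s n).1, rfl, fun n => (s n).2, ?_, fun n => hF3 (s n) n⟩
  intro m n hmn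
  induction n, hmn using Nat.le_induction with
  | base => exact (s m).2.proj.1
  | succ n _ ih =>
    have h : (s n).1 * (s (n + 1)).1 = (s (n + 1)).1 := hF2 (s n) n
    change (s m).1 * (s n).1 = (s n).1 at ih
    change (s m).1 * (s (n + 1)).1 = (s (n + 1)).1
    rw [← h, ← mul_assoc, ih]

/-- `b` is the central value of `a` along `f`. -/
def Rel (M : VonNeumannAlgebra H) (f : ℕ → H →L[ℂ] H) (a b : H →L[ℂ] H) : Prop :=
  b ∈ ctr M ∧ Tendsto (fun n => (a - b) * f n) atTop (𝓝 0)

theorem Rel.refl (f : ℕ → H →L[ℂ] H) {a : H →L[ℂ] H} (ha : a ∈ ctr M) : Rel M f a a :=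
  ⟨ha, by simp⟩

theorem Rel.add {f : ℕ → H →L[ℂ] H} {a b a' b' : H →L[ℂ] H} (h : Rel M f a b)
    (h' : Rel M f a' b') : Rel M f (a + a') (b + b') := by
  refine ⟨add_mem h.1 h'.1, ?_⟩
  have := h.2.add h'.2
  rw [add_zero] at this
  refine this.congr fun n => ?_
  rw [← add_mul]; congr 1; abel

theorem Rel.mul {f : ℕ → H →L[ℂ] H} (hf : ∀ n, Good M G (f n)) {a b a' b' : H →L[ℂ] H}
    (ha' : a' ∈ cG M G) (h : Rel M f a b) (h' : Rel M f a' b') :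
    Rel M f (a * a') (b * b') := by
  refine ⟨mul_mem h.1 h'.1, ?_⟩
  have := (h.2.mul_const a').add (h'.2.const_mul b)
  rw [zero_mul, mul_zero, add_zero] at this
  refine this.congr fun n => ?_
  rw [mul_assoc, ← (hf n).comm a' ha', ← mul_assoc, ← mul_assoc, ← add_mul]
  congr 1
  rw [sub_mul, mul_sub]; abel

theorem Rel.star {f : ℕ → H →L[ℂ] H} (hG : ∀ p ∈ G, p ∈ M ∧ IsProjection p)
    (hf : ∀ n, Good M G (f n)) {a b : H →L[ℂ] H}
    (ha : a ∈ cG M G) (h : Rel M f a b) : Rel M f (star a) (star b) := by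
  refine ⟨star_mem h.1, ?_⟩
  have := h.2.star
  rw [star_zero] at this
  refine this.congr fun n => ?_
  rw [(hf n).comm _ (sub_mem ha (ctr_le_cG hG h.1)), star_mul, star_sub, (hf n).proj.2]

theorem Rel.norm_le {f : ℕ → H →L[ℂ] H} (hf : ∀ n, Good M G (f n)) {a b : H →L[ℂ] H}
    (h : Rel M f a b) : ‖b‖ ≤ ‖a‖ := by
  have h1 : Tendsto (fun n => ‖a‖ + ‖(a - b) * f n‖) atTop (𝓝 (‖a‖ + 0)) :=
    h.2.norm.const_add _ |>.congr (fun _ => rfl) |> fun t => by simpa using t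
  rw [add_zero] at h1
  refine ge_of_tendsto' h1 fun n => ?_
  have e : ‖b * f n‖ = ‖b‖ :=
    norm_mul_of_full M (f n) (cG_mem (hf n).mem) (hf n).proj (hf n).full b h.1
  have e2 : b * f n = a * f n - (a - b) * f n := by rw [sub_mul]; abel
  rw [← e, e2]
  refine (norm_sub_le _ _).trans ?_
  gcongr
  refine (norm_mul_le _ _).trans ?_
  exact mul_le_of_le_one_right (norm_nonneg _) (hf n).proj.norm_le

theorem Rel.sub {f : ℕ → H →L[ℂ] H} {a b a' b' : H →L[ℂ] H} (h : Rel M f a b)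
    (h' : Rel M f a' b') : Rel M f (a - a') (b - b') := by
  refine ⟨sub_mem h.1 h'.1, ?_⟩
  have := h.2.sub h'.2
  rw [sub_zero] at this
  refine this.congr fun n => ?_
  rw [← sub_mul]; congr 1; abel

theorem Rel.unique {f : ℕ → H →L[ℂ] H} (hf : ∀ n, Good M G (f n)) {a b b' : H →L[ℂ] H}
    (h : Rel M f a b) (h' : Rel M f a b') : b = b' := by
  have := (h.sub h').norm_le hf
  rw [sub_self, norm_zero] at this
  exact sub_eq_zero.1 (norm_le_zero_iff.1 this)

/-- The domain of the relation. -/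
def dom (hG : ∀ p ∈ G, p ∈ M ∧ IsProjection p) (f : ℕ → H →L[ℂ] H) (hf : ∀ n, Good M G (f n)) :
    StarSubalgebra ℂ (H →L[ℂ] H) where
  carrier := {a | a ∈ cG M G ∧ ∃ b, Rel M f a b}
  mul_mem' := by
    rintro a a' ⟨ha, b, hb⟩ ⟨ha', b', hb'⟩
    exact ⟨mul_mem ha ha', _, hb.mul hf ha' hb'⟩
  add_mem' := by
    rintro a a' ⟨ha, b, hb⟩ ⟨ha', b', hb'⟩
    exact ⟨add_mem ha ha', _, hb.add hb'⟩
  algebraMap_mem' := fun r => ⟨algebraMap_mem _ r, _, Rel.refl f (algebraMap_mem _ r)⟩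
  star_mem' := by
    rintro a ⟨ha, b, hb⟩
    exact ⟨star_mem ha, _, hb.star hG hf ha⟩

theorem isClosed_dom (hG : ∀ p ∈ G, p ∈ M ∧ IsProjection p) (f : ℕ → H →L[ℂ] H)
    (hf : ∀ n, Good M G (f n)) : IsClosed (dom hG f hf : Set (H →L[ℂ] H)) := by
  rw [← isSeqClosed_iff_isClosed]
  intro u a hu hua
  have hu1 : ∀ k, u k ∈ cG M G := fun k => (hu k).1
  choose v hv using fun k => (hu k).2
  have hcau : CauchySeq v := by
    have hcu := hua.cauchySeq
    rw [Metric.cauchySeq_iff] at hcu ⊢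
    intro ε hε
    obtain ⟨N, hN⟩ := hcu ε hε
    refine ⟨N, fun m hm n hn => ?_⟩
    refine lt_of_le_of_lt ?_ (hN m hm n hn)
    rw [dist_eq_norm, dist_eq_norm]
    exact ((hv m).sub (hv n)).norm_le hf
  obtain ⟨b, hb⟩ := cauchySeq_tendsto_of_complete hcau
  refine ⟨(isClosed_cG M G).mem_of_tendsto hua (Eventually.of_forall hu1), b,
    (isClosed_ctr M).mem_of_tendsto hb (Eventually.of_forall fun k => (hv k).1), ?_⟩
  rw [Metric.tendsto_atTop]
  intro ε hε
  have hd : Tendsto (fun k => ‖(a - b) - (u k - v k)‖) atTop (𝓝 0) := by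
    have := ((tendsto_const_nhds (x := a - b)).sub (hua.sub hb)).norm
    simpa using this
  obtain ⟨k, hk⟩ := (hd.eventually (gt_mem_nhds (half_pos hε))).exists
  obtain ⟨N, hN⟩ := Metric.tendsto_atTop.1 (hv k).2 (ε / 2) (half_pos hε)
  refine ⟨N, fun n hn => ?_⟩
  have h1 := hN n hn
  rw [dist_zero_right] at h1 ⊢
  have e : (a - b) * f n = ((a - b) - (u k - v k)) * f n + (u k - v k) * f n := by
    rw [← add_mul]; congr 1; abel
  rw [e]
  have h2 : ‖((a - b) - (u k - v k)) * f n‖ ≤ ‖(a - b) - (u k - v k)‖ :=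
    (norm_mul_le _ _).trans (mul_le_of_le_one_right (norm_nonneg _) (hf n).proj.norm_le)
  linarith [norm_add_le (((a - b) - (u k - v k)) * f n) ((u k - v k) * f n)]

theorem exists_hom (hG : ∀ p ∈ G, p ∈ M ∧ IsProjection p) (f : ℕ → H →L[ℂ] H)
    (hf : ∀ n, Good M G (f n)) (A : StarSubalgebra ℂ (H →L[ℂ] H)) (hA : A ≤ dom hG f hf) :
    ∃ ψ : A →⋆ₐ[ℂ] (H →L[ℂ] H), ∀ a : A, Rel M f a (ψ a) := by
  choose ψ hψ using fun a : A => (hA a.2).2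
  have hc : ∀ a : A, (a : H →L[ℂ] H) ∈ cG M G := fun a => (hA a.2).1
  have hu : ∀ (a : A) b, Rel M f a b → ψ a = b := fun a b h => (hψ a).unique hf h
  refine ⟨{ toFun := ψ, map_one' := ?_, map_mul' := ?_, map_zero' := ?_, map_add' := ?_,
            commutes' := ?_, map_star' := ?_ }, hψ⟩
  · exact hu _ _ (Rel.refl f (one_mem _))
  · exact fun a b => hu _ _ ((hψ a).mul hf (hc b) (hψ b))
  · exact hu _ _ (Rel.refl f (zero_mem _))
  · exact fun a b => hu _ _ ((hψ a).add (hψ b))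
  · exact fun r => hu _ _ (Rel.refl f (algebraMap_mem _ r))
  · exact fun a => hu _ _ ((hψ a).star hG hf (hc a))

theorem gen_le {S : Set (H →L[ℂ] H)} {T : StarSubalgebra ℂ (H →L[ℂ] H)}
    (hT : IsClosed (T : Set (H →L[ℂ] H))) (h : S ⊆ T) : CstarGen S ≤ T :=
  StarSubalgebra.topologicalClosure_minimal (StarAlgebra.adjoin_le h) hT

end VNA

namespace VNA

variable {H : Type*} [NormedAddCommGroup H] [InnerProductSpace ℂ H] [CompleteSpace H]
variable {M : VonNeumannAlgebra H} {G : Set (H →L[ℂ] H)}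

theorem gen_le_cG {Z : Set (H →L[ℂ] H)} (hG : ∀ p ∈ G, p ∈ M ∧ IsProjection p)
    (hGcomm : ∀ p ∈ G, ∀ q ∈ G, p * q = q * p) (hZ : ∀ z ∈ Z, z ∈ ctr M) :
    CstarGen (G ∪ Z) ≤ cG M G := by
  refine gen_le (isClosed_cG M G) ?_
  rintro x (hx | hx)
  · exact (Nice.of_mem hG hGcomm hx).mem
  · exact ctr_le_cG hG (hZ x hx)

theorem exists_psi {Z : Set (H →L[ℂ] H)} (hG : ∀ p ∈ G, p ∈ M ∧ IsProjection p)
    (hGcomm : ∀ p ∈ G, ∀ q ∈ G, p * q = q * p) (hZ : ∀ z ∈ Z, z ∈ ctr M)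
    (g : ℕ → H →L[ℂ] H) (hg : ∀ n, Nice M G (g n)) (hgG : ∀ p ∈ G, ∃ n, g n = p)
    (q : H →L[ℂ] H) (hq : Nice M G q) :
    ∃ ψ : CstarGen (G ∪ Z) →⋆ₐ[ℂ] (H →L[ℂ] H),
      (∀ a, ψ a ∈ ctr M) ∧
      (∀ b ∈ CstarGen Z, ∀ hb' : b ∈ CstarGen (G ∪ Z), ψ ⟨b, hb'⟩ = b) ∧
      (∀ hq' : q ∈ CstarGen (G ∪ Z), ψ ⟨q, hq'⟩ * q = q) ∧
      (∀ a, ψ a = 0 → ∀ b ∈ ctr M, ‖b * q‖ ≤ ‖((a : H →L[ℂ] H) - b) * q‖) := by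
  obtain ⟨f₀, c, hf₀, hc, hcq, hqc, hcp⟩ := good_start hG hq
  obtain ⟨f, hf0, hf, hmono, hgen⟩ := good_seq hG hf₀ g hg
  have hqcf : ∀ n, (q - c) * f n = 0 := fun n => by
    rw [← hmono 0 n (Nat.zero_le n), hf0, ← mul_assoc, hqc, zero_mul]
  have hA : CstarGen (G ∪ Z) ≤ dom hG f hf := by
    refine gen_le (isClosed_dom hG f hf) ?_
    rintro x (hx | hx)
    · refine ⟨(Nice.of_mem hG hGcomm hx).mem, ?_⟩
      obtain ⟨n, rfl⟩ := hgG x hx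
      obtain ⟨e, he, hfe⟩ := hgen n
      refine ⟨e, he, ?_⟩
      refine tendsto_const_nhds.congr' ?_
      filter_upwards [eventually_ge_atTop (n + 1)] with k hk
      rw [← hmono (n + 1) k hk, ← mul_assoc, hfe, zero_mul]
    · exact ⟨ctr_le_cG hG (hZ x hx), x, Rel.refl f (hZ x hx)⟩
  obtain ⟨ψ, hψ⟩ := exists_hom hG f hf _ hA
  refine ⟨ψ, fun a => (hψ a).1, ?_, ?_, ?_⟩
  · intro b hb hb'
    have : b ∈ ctr M := gen_le (isClosed_ctr M) hZ hb
    exact (hψ ⟨b, hb'⟩).unique hf (Rel.refl f this)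
  · intro hq'
    have : Rel M f q c := ⟨hc, by simp [hqcf]⟩
    rw [(hψ ⟨q, hq'⟩).unique hf this, hcq]
  · intro a ha b hb
    have hr := (hψ a).2
    rw [ha] at hr
    simp only [sub_zero] at hr
    have haC : (a : H →L[ℂ] H) ∈ cG M G := (hA a.2).1
    have h1 : Tendsto (fun n => ‖((a : H →L[ℂ] H) - b) * q‖ + ‖(a : H →L[ℂ] H) * f n * q‖) atTop
        (𝓝 (‖((a : H →L[ℂ] H) - b) * q‖)) := by
      have := ((hr.mul_const q).norm).const_add (‖((a : H →L[ℂ] H) - b) * q‖)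
      simpa using this
    refine ge_of_tendsto' h1 fun n => ?_
    have e1 : b * q = b * c * q := by rw [mul_assoc, hcq]
    have e2 : ‖b * c * f n‖ = ‖b * c‖ :=
      norm_mul_of_full M (f n) (cG_mem (hf n).mem) (hf n).proj (hf n).full _ (mul_mem hb hc)
    have e3 : q * f n = c * f n := by
      have := hqcf n
      rwa [sub_mul, sub_eq_zero] at this
    have e4 : b * c * f n = (a : H →L[ℂ] H) * f n * q - ((a : H →L[ℂ] H) - b) * q * f n := by
      rw [mul_assoc, ← e3, mul_assoc (a : H →L[ℂ] H), ← (hf n).comm q hq.mem,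
        mul_assoc ((a : H →L[ℂ] H) - b), ← sub_mul]
      congr 1; abel
    calc ‖b * q‖ ≤ ‖b * c‖ := by
          rw [e1]
          exact (norm_mul_le _ _).trans (mul_le_of_le_one_right (norm_nonneg _) hq.proj.norm_le)
      _ = ‖b * c * f n‖ := e2.symm
      _ ≤ ‖(a : H →L[ℂ] H) * f n * q‖ + ‖((a : H →L[ℂ] H) - b) * q * f n‖ := by
          rw [e4]; exact norm_sub_le _ _
      _ ≤ ‖(a : H →L[ℂ] H) * f n * q‖ + ‖((a : H →L[ℂ] H) - b) * q‖ := by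
          gcongr
          exact (norm_mul_le _ _).trans
            (mul_le_of_le_one_right (norm_nonneg _) (hf n).proj.norm_le)
      _ = _ := add_comm _ _

/-- Products of the `g i` and their complements along a word. -/
def qw (g : ℕ → H →L[ℂ] H) : List Bool → (H →L[ℂ] H)
  | [] => 1
  | b :: l => qw g l * (if b then g l.length else 1 - g l.length)

theorem qw_nice {g : ℕ → H →L[ℂ] H} (hg : ∀ n, Nice M G (g n)) (l : List Bool) :
    Nice M G (qw g l) := by
  induction l with
  | nil => exact Nice.one
  | cons b l ih =>
    refine ih.mul ?_
    split_ifs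
    · exact hg _
    · exact (hg _).compl

theorem qw_gen {g : ℕ → H →L[ℂ] H} (hg : ∀ n, Nice M G (g n)) (i : ℕ) (l : List Bool)
    (hl : i < l.length) : ∃ b ∈ ctr M, (g i - b) * qw g l = 0 := by
  induction l with
  | nil => simp at hl
  | cons t l ih =>
    rw [List.length_cons, Nat.lt_succ_iff] at hl
    rcases hl.lt_or_eq with h | h
    · obtain ⟨b, hb, hbq⟩ := ih h
      exact ⟨b, hb, by rw [qw, ← mul_assoc, hbq, zero_mul]⟩
    · have hc := (qw_nice hg l).comm (g i) (hg i).mem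
      cases t
      · refine ⟨0, zero_mem _, ?_⟩
        rw [qw, ← h, sub_zero, ← mul_assoc, hc, mul_assoc]
        simp [mul_sub, (hg i).proj.1]
      · refine ⟨1, one_mem _, ?_⟩
        have hc' : (g i - 1) * qw g l = qw g l * (g i - 1) := by
          rw [sub_mul, mul_sub, hc, one_mul, mul_one]
        rw [qw, ← h, ← mul_assoc, hc', mul_assoc]
        simp [sub_mul, (hg i).proj.1]

theorem exists_word {g : ℕ → H →L[ℂ] H} (hg : ∀ n, Nice M G (g n)) (a : H →L[ℂ] H)
    (ha : a ∈ cG M G) (n : ℕ) : ∃ l : List Bool, l.length = n ∧ ‖a * qw g l‖ = ‖a‖ := by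
  induction n with
  | zero => exact ⟨[], rfl, by rw [qw, mul_one]⟩
  | succ n ih =>
    obtain ⟨l, hl, hn⟩ := ih
    rcases norm_split (a * qw g l) (g n) (hg n).proj
      ((hg n).comm _ (mul_mem ha (qw_nice hg l).mem)) with h | h
    · refine ⟨true :: l, by simp [hl], ?_⟩
      rw [qw, hl, ← mul_assoc, ← hn, ← h]; simp
    · refine ⟨false :: l, by simp [hl], ?_⟩
      rw [qw, hl, ← mul_assoc, ← hn, ← h]; simp

theorem adjoin_local {Z : Set (H →L[ℂ] H)} (hG : ∀ p ∈ G, p ∈ M ∧ IsProjection p)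
    (hGcomm : ∀ p ∈ G, ∀ q ∈ G, p * q = q * p) (hZ : ∀ z ∈ Z, z ∈ ctr M)
    (g : ℕ → H →L[ℂ] H) (hg : ∀ n, Nice M G (g n)) (hgG : ∀ p ∈ G, ∃ n, g n = p)
    (a : H →L[ℂ] H) (ha : a ∈ StarAlgebra.adjoin ℂ (G ∪ Z)) :
    ∃ n, ∀ l : List Bool, n ≤ l.length → ∃ b ∈ ctr M, (a - b) * qw g l = 0 := by
  have hle : StarAlgebra.adjoin ℂ (G ∪ Z) ≤ cG M G :=
    (StarSubalgebra.le_topologicalClosure _).trans (gen_le_cG hG hGcomm hZ)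
  induction ha using StarAlgebra.adjoin_induction with
  | mem x hx =>
    rcases hx with hx | hx
    · obtain ⟨i, rfl⟩ := hgG x hx
      exact ⟨i + 1, fun l hl => qw_gen hg i l hl⟩
    · exact ⟨0, fun l _ => ⟨x, hZ x hx, by simp⟩⟩
  | algebraMap r => exact ⟨0, fun l _ => ⟨_, algebraMap_mem _ r, by simp⟩⟩
  | add x y hx hy ihx ihy =>
    obtain ⟨n, hn⟩ := ihx
    obtain ⟨m, hm⟩ := ihy
    refine ⟨max n m, fun l hl => ?_⟩
    obtain ⟨b, hb, e⟩ := hn l ((le_max_left _ _).trans hl)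
    obtain ⟨b', hb', e'⟩ := hm l ((le_max_right _ _).trans hl)
    refine ⟨b + b', add_mem hb hb', ?_⟩
    rw [add_sub_add_comm, add_mul, e, e', add_zero]
  | mul x y hx hy ihx ihy =>
    obtain ⟨n, hn⟩ := ihx
    obtain ⟨m, hm⟩ := ihy
    refine ⟨max n m, fun l hl => ?_⟩
    obtain ⟨b, hb, e⟩ := hn l ((le_max_left _ _).trans hl)
    obtain ⟨b', hb', e'⟩ := hm l ((le_max_right _ _).trans hl)
    refine ⟨b * b', mul_mem hb hb', ?_⟩
    have : x * y - b * b' = x * (y - b') + (x - b) * b' := by rw [mul_sub, sub_mul]; abel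
    rw [this, add_mul, mul_assoc, e', mul_zero, mul_assoc,
      (qw_nice hg l).comm b' (ctr_le_cG hG hb'), ← mul_assoc, e, zero_mul, add_zero]
  | star x hx ih =>
    obtain ⟨n, hn⟩ := ih
    refine ⟨n, fun l hl => ?_⟩
    obtain ⟨b, hb, e⟩ := hn l hl
    refine ⟨star b, star_mem hb, ?_⟩
    rw [(qw_nice hg l).comm _ (sub_mem (hle hx) (ctr_le_cG hG hb))] at e
    have := congrArg star e
    rwa [star_mul, star_sub, star_zero, (qw_nice hg l).proj.2] at this

theorem projSup_limit (e : ℕ → H →L[ℂ] H) (he : ∀ k, IsProjection (e k))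
    (hc : ∀ j k, e j * e k = e k * e j) (p : H →L[ℂ] H) (k₀ : ℕ) (hp : e k₀ * p = p) :
    ∃ s : H →L[ℂ] H,
      (∀ ξ : H, Tendsto (fun m => projSupSeq e m ξ) atTop (𝓝 (s ξ))) ∧ s * p = p := by
  have hcP : ∀ m k, projSupSeq e m * e k = e k * projSupSeq e m := by
    intro m k
    induction m with
    | zero => exact hc 0 k
    | succ m ih =>
      rw [projSupSeq, sub_mul, add_mul, mul_sub, mul_add, ih, hc, mul_assoc, hc (m + 1) k,
        ← mul_assoc, ih, mul_assoc]
  have hP : ∀ m, IsProjection (projSupSeq e m) := by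
    intro m
    induction m with
    | zero => exact he 0
    | succ m ih =>
      constructor
      · have a1 : projSupSeq e m * e (m + 1) * projSupSeq e m = projSupSeq e m * e (m + 1) := by
          rw [mul_assoc, ← hcP, ← mul_assoc, ih.1]
        have a2 : e (m + 1) * projSupSeq e m = projSupSeq e m * e (m + 1) := (hcP _ _).symm
        have a3 : projSupSeq e m * e (m + 1) * e (m + 1) = projSupSeq e m * e (m + 1) := by
          rw [mul_assoc, (he _).1]
        rw [projSupSeq]
        simp only [mul_sub, mul_add, sub_mul, add_mul, ← mul_assoc, a1, a2, a3, ih.1, (he _).1]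
        abel
      · rw [projSupSeq, star_sub, star_add, star_mul, ih.2, (he _).2, hcP]
  have hstep : ∀ m, projSupSeq e (m + 1) * projSupSeq e m = projSupSeq e m := by
    intro m
    rw [projSupSeq, sub_mul, add_mul, (hP m).1, mul_assoc, ← hcP, ← mul_assoc, (hP m).1]
    abel
  have habs : ∀ m, k₀ ≤ m → projSupSeq e m * e k₀ = e k₀ := by
    intro m hm
    induction m, hm using Nat.le_induction with
    | base =>
      cases k₀ with
      | zero => exact (he 0).1
      | succ k =>
        rw [projSupSeq, sub_mul, add_mul, mul_assoc, (he _).1]; abel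
    | succ m _ ih =>
      rw [projSupSeq, sub_mul, add_mul, mul_assoc, hc (m + 1), ← mul_assoc, ih]; abel
  have hS : ∀ m, IsStarProjection (projSupSeq e m) := fun m => ⟨(hP m).1, (hP m).2⟩
  choose inst hinst using fun m => isStarProjection_iff_eq_starProjection_range.1 (hS m)
  let U : ℕ → Submodule ℂ H := fun m => (projSupSeq e m).range
  have hU : Monotone U := by
    refine monotone_nat_of_le_succ fun m => ?_
    rintro _ ⟨x, rfl⟩
    refine ⟨projSupSeq e m x, ?_⟩
    exact DFunLike.congr_fun (hstep m) x
  have : ∀ m, (U m).HasOrthogonalProjection := inst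
  have : CompleteSpace ((⨆ i, U i).topologicalClosure) :=
    (Submodule.isClosed_topologicalClosure _).completeSpace_coe
  have ht : ∀ ξ : H, Tendsto (fun m => projSupSeq e m ξ) atTop
      (𝓝 ((⨆ i, U i).topologicalClosure.starProjection ξ)) := by
    intro ξ
    refine (Submodule.starProjection_tendsto_closure_iSup U hU ξ).congr fun m => ?_
    exact (DFunLike.congr_fun (hinst m) ξ).symm
  refine ⟨_, ht, ?_⟩
  ext ξ
  refine tendsto_nhds_unique (ht (p ξ)) ?_
  refine tendsto_const_nhds.congr' ?_
  filter_upwards [eventually_ge_atTop k₀] with m hm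
  have h2 : projSupSeq e m * p = p := by rw [← hp, ← mul_assoc, habs m hm]
  exact (DFunLike.congr_fun h2 ξ).symm

end VNA
open VNA in
/-- Existence of a separating sequence of centre-valued unital
*-homomorphisms on `C*(G ∪ Z)` which fix `C*(Z)` and satisfy `p ≤ ⋁_k ψ_k(p)` for `p ∈ G`. -/
theorem statement_12 {H : Type*} [NormedAddCommGroup H] [InnerProductSpace ℂ H]
    [CompleteSpace H] (M : VonNeumannAlgebra H)
    (G Z : Set (H →L[ℂ] H)) (hGc : G.Countable) (hZc : Z.Countable)
    (hG : ∀ p ∈ G, p ∈ M ∧ IsProjection p)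
    (hGcomm : ∀ p ∈ G, ∀ q ∈ G, p * q = q * p)
    (hZ : ∀ z ∈ Z, IsProjection z ∧ z ∈ centerSet M)
    (h1 : (1 : H →L[ℂ] H) ∈ Z) :
    ∃ ψ : ℕ → (CstarGen (G ∪ Z) →⋆ₐ[ℂ] (H →L[ℂ] H)),
      (∀ k (a : CstarGen (G ∪ Z)), ψ k a ∈ centerSet M) ∧
      (∀ k (b : H →L[ℂ] H), b ∈ CstarGen Z → ∀ hb' : b ∈ CstarGen (G ∪ Z),
        ψ k ⟨b, hb'⟩ = b) ∧
      (∀ a : CstarGen (G ∪ Z), a ≠ 0 → ∃ k, ψ k a ≠ 0) ∧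
      (∀ p, p ∈ G → ∀ hp' : p ∈ CstarGen (G ∪ Z),
        ∃ s : H →L[ℂ] H,
          (∀ ξ : H, Filter.Tendsto
            (fun m => projSupSeq (fun k => ψ k ⟨p, hp'⟩) m ξ) Filter.atTop (nhds (s ξ))) ∧
          s * p = p) := by

  have hZ' : ∀ z ∈ Z, z ∈ ctr M := fun z hz => mem_ctr.2 (hZ z hz).2
  obtain ⟨g, hgr⟩ := (hGc.insert 1).exists_eq_range (Set.insert_nonempty 1 G)
  have hg : ∀ n, Nice M G (g n) := by
    intro n
    have : g n ∈ insert 1 G := hgr ▸ Set.mem_range_self n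
    rcases this with h | h
    · rw [h]; exact Nice.one
    · exact Nice.of_mem hG hGcomm h
  have hgG : ∀ p ∈ G, ∃ n, g n = p := by
    intro p hp
    have : p ∈ Set.range g := hgr ▸ Set.mem_insert_of_mem 1 hp
    exact this
  have hQc : (Set.range (qw g) ∪ Set.range g).Countable :=
    (Set.countable_range _).union (Set.countable_range _)
  obtain ⟨Q, hQr⟩ := hQc.exists_eq_range ⟨_, Or.inl (Set.mem_range_self [])⟩
  have hQ : ∀ k, Nice M G (Q k) := by
    intro k
    have : Q k ∈ Set.range (qw g) ∪ Set.range g := hQr ▸ Set.mem_range_self k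
    rcases this with ⟨l, h⟩ | ⟨n, h⟩
    · rw [← h]; exact qw_nice hg l
    · rw [← h]; exact hg n
  choose ψ h1 h2 h3 h4 using fun k => exists_psi (Z := Z) hG hGcomm hZ' g hg hgG (Q k) (hQ k)
  refine ⟨ψ, fun k a => mem_ctr.1 (h1 k a), h2, ?_, ?_⟩
  · intro a ha
    by_contra! hcon
    have hapos : 0 < ‖(a : H →L[ℂ] H)‖ := norm_pos_iff.2 fun h => ha (Subtype.ext h)
    have haC : (a : H →L[ℂ] H) ∈ cG M G := gen_le_cG hG hGcomm hZ' a.2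
    have hcl : (a : H →L[ℂ] H) ∈ closure (StarAlgebra.adjoin ℂ (G ∪ Z) : Set (H →L[ℂ] H)) := a.2
    obtain ⟨a', ha', hd⟩ := Metric.mem_closure_iff.1 hcl (‖(a : H →L[ℂ] H)‖ / 3) (by positivity)
    rw [dist_eq_norm] at hd
    obtain ⟨n, hn⟩ := adjoin_local hG hGcomm hZ' g hg hgG a' ha'
    obtain ⟨l, hl, hnorm⟩ := exists_word hg (a : H →L[ℂ] H) haC n
    obtain ⟨b, hb, hbq⟩ := hn l hl.ge
    have : qw g l ∈ Set.range Q := hQr ▸ Or.inl (Set.mem_range_self l)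
    obtain ⟨k, hk⟩ := this
    have h5 := h4 k a (hcon k) b hb
    rw [hk] at h5
    have e1 : a' * qw g l = b * qw g l := by rwa [sub_mul, sub_eq_zero] at hbq
    have e2 : ((a : H →L[ℂ] H) - b) * qw g l = ((a : H →L[ℂ] H) - a') * qw g l := by
      rw [sub_mul, sub_mul, e1]
    have e3 : ‖((a : H →L[ℂ] H) - a') * qw g l‖ ≤ ‖(a : H →L[ℂ] H) - a'‖ :=
      (norm_mul_le _ _).trans (mul_le_of_le_one_right (norm_nonneg _) (qw_nice hg l).proj.norm_le)
    have e4 : (a : H →L[ℂ] H) * qw g l = ((a : H →L[ℂ] H) - a') * qw g l + b * qw g l := by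
      rw [← e1, ← add_mul, sub_add_cancel]
    have e5 := norm_add_le (((a : H →L[ℂ] H) - a') * qw g l) (b * qw g l)
    rw [← e4, hnorm] at e5
    rw [e2] at h5
    linarith
  · intro p hp hp'
    obtain ⟨n, hn⟩ := hgG p hp
    have : p ∈ Set.range Q := hQr ▸ Or.inr ⟨n, hn⟩
    obtain ⟨k, rfl⟩ := this
    refine projSup_limit _ (fun j => ?_) (fun i j => ?_) _ k (h3 k hp')
    · constructor
      · rw [← map_mul]
        congr 1
        exact Subtype.ext (hQ k).proj.1
      · rw [← map_star]
        congr 1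
        exact Subtype.ext (hQ k).proj.2
    · exact (mem_ctr.1 (h1 i _)).2 _ (mem_ctr.1 (h1 j _)).1
end
end

section
/- Let M be a properly infinite σ-finite von Neumann algebra with a faithful normal semifinite trace τ, and let α ∈ M^n (n ≥ 1) be a commuting self-adjoint n-tuple such that the only finite projection of M belonging to WZ*(α) is 0. Then there exists a sequence of isometries (v_j)_{j≥0} in M such that: (i) v_{j₁}* v_{j₂} = δ_{j₁,j₂}·1 for all j₁, j₂ ≥ 0; (ii) [v_j, α(i)] ∈ K(M,τ) for every j ≥ 0 and every 1 ≤ i ≤ n; (iii) ‖[v_j, α]‖ → 0 as j → ∞. -/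
open ContinuousLinearMap Filter Topology

noncomputable section

namespace VNAux
open VNA
universe u
variable {H : Type u} [NormedAddCommGroup H] [InnerProductSpace ℂ H] [CompleteSpace H]


lemma mulA (S T : H →L[ℂ] H) (ξ : H) : (S * T) ξ = S (T ξ) := rfl

lemma IsProjection.isStar {p : H →L[ℂ] H} (h : IsProjection p) : IsStarProjection p :=
  ⟨h.1, h.2⟩

lemma isProj_starProjection (U : Submodule ℂ H) [U.HasOrthogonalProjection] :
    IsProjection U.starProjection := by
  refine ⟨U.isIdempotentElem_starProjection, ?_⟩
  exact (isStarProjection_starProjection (U := U)).isSelfAdjoint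

lemma proj_one_sub {p : H →L[ℂ] H} (h : IsProjection p) : IsProjection (1 - p) := by
  obtain ⟨h1, h2⟩ := h
  refine ⟨?_, by simp [h2]⟩
  rw [sub_mul, mul_sub, mul_sub, h1]; simp

lemma proj_nonneg {p : H →L[ℂ] H} (h : IsProjection p) : 0 ≤ p := by
  have := star_mul_self_nonneg p
  rwa [h.2, h.1] at this

/-- `r` is the range projection of `x`. -/
def IsRangeProj (x r : H →L[ℂ] H) : Prop :=
  IsProjection r ∧ r * x = x ∧ ∀ y : H →L[ℂ] H, y * x = 0 → y * r = 0

lemma exists_rangeProj (x : H →L[ℂ] H) : ∃ r, IsRangeProj x r := by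
  refine ⟨(LinearMap.range (x : H →ₗ[ℂ] H)).topologicalClosure.starProjection,
    isProj_starProjection _, ?_, ?_⟩
  · ext ξ
    simp only [mulA]
    rw [Submodule.starProjection_eq_self_iff]
    exact Submodule.le_topologicalClosure _ ⟨ξ, rfl⟩
  · intro y hy
    ext ξ
    simp only [mulA, zero_apply]
    have h1 := Submodule.starProjection_apply_mem
      (LinearMap.range (x : H →ₗ[ℂ] H)).topologicalClosure ξ
    have h2 : (LinearMap.range (x : H →ₗ[ℂ] H)).topologicalClosure
        ≤ LinearMap.ker (y : H →ₗ[ℂ] H) := by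
      apply Submodule.topologicalClosure_minimal
      · rintro _ ⟨η, rfl⟩
        have := congrArg (fun T : H →L[ℂ] H => T η) hy
        simpa using this
      · exact y.isClosed_ker
    exact h2 h1

lemma IsRangeProj.left_eq {x r y z : H →L[ℂ] H} (h : IsRangeProj x r) (hy : y * x = z * x) :
    y * r = z * r := by
  have := h.2.2 (y - z) (by rw [sub_mul, hy, sub_self])
  rwa [sub_mul, sub_eq_zero] at this

lemma IsRangeProj.commute {x r y : H →L[ℂ] H} (h : IsRangeProj x r) (h1 : y * x = x * y)
    (h2 : star y * x = x * star y) : y * r = r * y := by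
  have key : ∀ y : H →L[ℂ] H, y * x = x * y → y * r = r * y * r := by
    intro y hy
    apply h.left_eq
    rw [mul_assoc, hy, ← mul_assoc, h.2.1]
  have a := key y h1
  have b := congrArg star (key _ h2)
  simp only [star_mul, star_star, h.1.2] at b
  rw [a, mul_assoc, ← b]

lemma IsRangeProj.commute_sa {x r y : H →L[ℂ] H} (h : IsRangeProj x r) (hx : star x = x)
    (h1 : y * x = x * y) : y * r = r * y := by
  refine h.commute h1 ?_
  have := congrArg star h1
  simpa [hx] using this.symm

lemma star_commutant {M : VonNeumannAlgebra H} {y : H →L[ℂ] H} (hy : y ∈ M.commutant) :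
    star y ∈ M.commutant := star_mem hy

lemma mem_of_commutant {M : VonNeumannAlgebra H} {x : H →L[ℂ] H}
    (h : ∀ y ∈ M.commutant, y * x = x * y) : x ∈ M := by
  rw [← M.commutant_commutant, VonNeumannAlgebra.mem_commutant_iff]
  exact h

lemma comm_of_commutant {M : VonNeumannAlgebra H} {x y : H →L[ℂ] H} (hx : x ∈ M)
    (hy : y ∈ M.commutant) : y * x = x * y :=
  ((VonNeumannAlgebra.mem_commutant_iff.1 hy) x hx).symm

lemma IsRangeProj.mem {M : VonNeumannAlgebra H} {x r : H →L[ℂ] H} (h : IsRangeProj x r)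
    (hx : x ∈ M) : r ∈ M :=
  mem_of_commutant fun _ hy =>
    h.commute (comm_of_commutant hx hy) (comm_of_commutant hx (star_commutant hy))

lemma norm_abs_apply (x : H →L[ℂ] H) (ξ : H) : ‖CFC.abs x ξ‖ = ‖x ξ‖ := by
  have hsa : star (CFC.abs x) = CFC.abs x := (CFC.abs_nonneg x).isSelfAdjoint.star_eq
  have h := CFC.abs_mul_abs x
  have e1 : inner ℂ (CFC.abs x ξ) (CFC.abs x ξ) = inner ℂ (x ξ) (x ξ) := by
    rw [← ContinuousLinearMap.adjoint_inner_right, ← ContinuousLinearMap.adjoint_inner_right,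
      ← ContinuousLinearMap.star_eq_adjoint, ← ContinuousLinearMap.star_eq_adjoint, hsa]
    have := congrArg (fun T : H →L[ℂ] H => T ξ) h
    simp only [mulA] at this
    rw [this]
  rw [inner_self_eq_norm_sq_to_K, inner_self_eq_norm_sq_to_K] at e1
  have e2 : ‖CFC.abs x ξ‖ ^ 2 = ‖x ξ‖ ^ 2 := by exact_mod_cast e1
  exact (sq_eq_sq₀ (norm_nonneg _) (norm_nonneg _)).1 e2

/-- The raw polar factor. -/
lemma exists_polar_aux (x a : H →L[ℂ] H) (h : ∀ ξ, ‖a ξ‖ = ‖x ξ‖) :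
    ∃ v : H →L[ℂ] H, v * a = x := by
  set K := (LinearMap.range (a : H →ₗ[ℂ] H)).topologicalClosure with hK
  have hmem : ∀ ξ, (a : H →ₗ[ℂ] H) ξ ∈ K := fun ξ =>
    Submodule.le_topologicalClosure _ ⟨ξ, rfl⟩
  let e : H →ₗ[ℂ] K := LinearMap.codRestrict K (a : H →ₗ[ℂ] H) hmem
  have hd : DenseRange e := by
    intro k
    have hk : (k : H) ∈ closure (Set.range a) := by
      have := k.2
      rw [← SetLike.mem_coe] at this
      have h2 : (K : Set H) = closure (Set.range a) := by
        rw [hK, Submodule.topologicalClosure_coe]; rfl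
      rw [← h2]; exact this
    rw [closure_subtype]
    convert hk
    ext z
    constructor
    · rintro ⟨_, ⟨w, rfl⟩, rfl⟩
      exact ⟨w, rfl⟩
    · rintro ⟨w, rfl⟩
      exact ⟨e w, ⟨w, rfl⟩, rfl⟩
  have hn : ∃ C : ℝ, ∀ ξ, ‖(x : H →ₗ[ℂ] H) ξ‖ ≤ C * ‖e ξ‖ := ⟨1, fun ξ => by
    rw [one_mul]; exact (h ξ).symm.le⟩
  refine ⟨((x : H →ₗ[ℂ] H).extendOfNorm e).comp K.orthogonalProjectionOnto, ?_⟩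
  ext ξ
  have h1 : K.orthogonalProjectionOnto (a ξ) = e ξ :=
    Submodule.orthogonalProjectionOnto_mem_subspace_eq_self (e ξ)
  simp only [mulA, comp_apply, h1]
  exact LinearMap.extendOfNorm_eq hd hn ξ

/-- Polar decomposition inside `M`. -/
lemma exists_polar {M : VonNeumannAlgebra H} {x : H →L[ℂ] H} (hx : x ∈ M) :
    ∃ v ∈ M, IsProjection (star v * v) ∧ IsRangeProj x (v * star v) ∧
      x * (star v * v) = x ∧ ∀ y, x * y = 0 → star v * v * y = 0 := by
  set a := CFC.abs x with ha
  have hsa : star a = a := (CFC.abs_nonneg x).isSelfAdjoint.star_eq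
  have haa : a * a = star x * x := CFC.abs_mul_abs x
  obtain ⟨v0, hv0⟩ := exists_polar_aux x a (norm_abs_apply x)
  obtain ⟨r, hr⟩ := exists_rangeProj a
  have har : a * r = a := by
    have := congrArg star hr.2.1
    simpa [hsa, hr.1.2] using this
  set v := v0 * r with hv
  have hva : v * a = x := by rw [hv, mul_assoc, hr.2.1, hv0]
  have hvr : v * r = v := by rw [hv, mul_assoc, hr.1.1]
  have hrv : r * star v = star v := by
    have := congrArg star hvr
    simpa [hr.1.2] using this
  have hvv : star v * v = r := by
    have e1 : (a * (star v * v)) * a = a * a := by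
      rw [haa, ← hva]; simp [hsa, mul_assoc]
    have e2 : (a * (star v * v)) * r = a * r := hr.left_eq e1
    have e3 : a * (star v * v) = a := by
      rw [har, mul_assoc, mul_assoc, hvr] at e2
      exact e2
    have e4 := congrArg star e3
    simp only [star_mul, star_star, hsa] at e4
    have e5 : (star v * v) * r = 1 * r := hr.left_eq (by rw [one_mul, e4])
    rw [mul_assoc, hvr, one_mul] at e5
    exact e5
  have hvM : v ∈ M := by
    apply mem_of_commutant
    intro y hy
    have h1 := comm_of_commutant hx hy
    have h2 := comm_of_commutant (star_mem hx : star x ∈ M) hy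
    have h3 : y * a = a * y := by
      have : Commute y (CFC.abs x) := Commute.cfcAbs_right (a := x) h1.symm
        (comm_of_commutant hx (star_commutant hy)).symm
      exact this
    have h4 : y * r = r * y := hr.commute_sa hsa h3
    have h5 : (y * v) * r = (v * y) * r := by
      apply hr.left_eq
      rw [mul_assoc, hva, mul_assoc, h3, ← mul_assoc, hva, h1]
    rw [mul_assoc y v r, hvr, mul_assoc v y r, h4, ← mul_assoc v r y, hvr] at h5
    exact h5
  have hxr : x * r = x := by rw [← hva, mul_assoc, har]
  refine ⟨v, hvM, hvv ▸ hr.1, ⟨⟨?_, by simp⟩, ?_, ?_⟩, by rw [hvv, hxr], ?_⟩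
  · rw [mul_assoc, ← mul_assoc (star v), hvv, hrv]
  · rw [← hva, mul_assoc, ← mul_assoc (star v), hvv, hr.2.1]
  · intro y hy
    have : (y * v) * a = 0 := by rw [mul_assoc, hva, hy]
    have := hr.2.2 _ this
    rw [mul_assoc, hvr] at this
    rw [← mul_assoc, this, zero_mul]
  · intro y hy
    rw [hvv]
    have e1 : a * a * y = 0 := by rw [haa, mul_assoc, hy, mul_zero]
    have e2 : a * y = 0 := by
      have : star (a * y) * (a * y) = 0 := by
        rw [star_mul, hsa, mul_assoc, ← mul_assoc a, e1, mul_zero]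
      exact CStarRing.star_mul_self_eq_zero_iff _ |>.1 this
    have e3 : star y * a = 0 := by
      have := congrArg star e2
      simpa [hsa] using this
    have e4 := congrArg star (hr.2.2 _ e3)
    simpa [hr.1.2] using e4

lemma star_comm_proj {p q : H →L[ℂ] H} (hp : IsProjection p) (hq : IsProjection q)
    {r : H →L[ℂ] H} (hr : IsProjection r) (h : p * q = r) : q * p = r := by
  have := congrArg star h
  simpa [hp.2, hq.2, hr.2] using this

lemma proj_zero : IsProjection (0 : H →L[ℂ] H) := ⟨by simp, by simp⟩

lemma proj_add {p q : H →L[ℂ] H} (hp : IsProjection p) (hq : IsProjection q) (h : p * q = 0) :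
    IsProjection (p + q) := by
  have h' := star_comm_proj hp hq proj_zero h
  refine ⟨?_, by simp [hp.2, hq.2]⟩
  rw [add_mul, mul_add, mul_add, hp.1, hq.1, h, h']; simp

lemma proj_sub {p q : H →L[ℂ] H} (hp : IsProjection p) (hq : IsProjection q) (h : p * q = q) :
    IsProjection (p - q) := by
  have h' := star_comm_proj hp hq hq h
  refine ⟨?_, by simp [hp.2, hq.2]⟩
  rw [sub_mul, mul_sub, mul_sub, hp.1, hq.1, h, h']; simp

lemma proj_mul {p q : H →L[ℂ] H} (hp : IsProjection p) (hq : IsProjection q) (h : p * q = q * p) :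
    IsProjection (p * q) := by
  refine ⟨?_, by simp [hp.2, hq.2, h]⟩
  rw [mul_assoc, ← mul_assoc q, ← h, mul_assoc, hq.1, ← mul_assoc, hp.1]

section trace
variable {M : VonNeumannAlgebra H} {τ : (H →L[ℂ] H) → ENNReal} (hτ : IsFNSTrace M τ)
include hτ

lemma tau_mono {x y : H →L[ℂ] H} (hx : x ∈ M) (hy : y ∈ M) (h0 : 0 ≤ x) (h : x ≤ y) :
    τ x ≤ τ y := by
  have := hτ.additive x (y - x) hx (sub_mem hy hx) h0 (sub_nonneg.2 h)
  rw [add_sub_cancel] at this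
  rw [this]; exact le_self_add

lemma tf_of_le {p q : H →L[ℂ] H} (hp : IsTauFiniteProjection M τ p) (hq : q ∈ M)
    (hq' : IsProjection q) (h : p * q = q) : IsTauFiniteProjection M τ q := by
  refine ⟨hq, hq', lt_of_le_of_lt (tau_mono hτ hq hp.1 (proj_nonneg hq') ?_) hp.2.2⟩
  exact sub_nonneg.1 (proj_nonneg (proj_sub hp.2.1 hq' h))

lemma tf_add {p q : H →L[ℂ] H} (hp : IsTauFiniteProjection M τ p)
    (hq : IsTauFiniteProjection M τ q) (h : p * q = 0) : IsTauFiniteProjection M τ (p + q) := by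
  refine ⟨add_mem hp.1 hq.1, proj_add hp.2.1 hq.2.1 h, ?_⟩
  rw [hτ.additive p q hp.1 hq.1 (proj_nonneg hp.2.1) (proj_nonneg hq.2.1)]
  exact ENNReal.add_lt_top.2 ⟨hp.2.2, hq.2.2⟩

lemma tf_zero : IsTauFiniteProjection M τ 0 :=
  ⟨zero_mem M, proj_zero, by rw [hτ.map_zero]; exact ENNReal.zero_lt_top⟩

lemma tf_range {p x : H →L[ℂ] H} (hp : IsTauFiniteProjection M τ p) (hx : x ∈ M)
    (h : x * p = x) : ∃ r, IsTauFiniteProjection M τ r ∧ IsRangeProj x r := by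
  obtain ⟨v, hv, h1, h2, h3, h4⟩ := exists_polar hx
  refine ⟨v * star v, ⟨mul_mem hv (star_mem hv), h2.1, ?_⟩, h2⟩
  rw [← hτ.tracial v hv]
  have e1 : star v * v * (1 - p) = 0 := h4 _ (by rw [mul_sub, h, mul_one, sub_self])
  rw [mul_sub, mul_one, sub_eq_zero] at e1
  have e2 := star_comm_proj h1 hp.2.1 h1 e1.symm
  exact (tf_of_le hτ hp (mul_mem (star_mem hv) hv) h1 e2).2.2

lemma tf_join {p q : H →L[ℂ] H} (hp : IsTauFiniteProjection M τ p)
    (hq : IsTauFiniteProjection M τ q) :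
    ∃ s, IsTauFiniteProjection M τ s ∧ s * p = p ∧ s * q = q := by
  obtain ⟨r, hr, hr2⟩ := tf_range hτ (x := (1 - q) * p) hp
    (mul_mem (sub_mem (one_mem M) hq.1) hp.1) (by rw [mul_assoc, hp.2.1.1])
  have hqr : q * r = 0 := hr2.2.2 q (by rw [← mul_assoc, mul_sub, hq.2.1.1]; simp)
  have hrq := star_comm_proj hq.2.1 hr.2.1 proj_zero hqr
  refine ⟨q + r, tf_add hτ hq hr hqr, ?_, ?_⟩
  · have h1 : r * ((1 - q) * p) = (1 - q) * p := hr2.2.1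
    have h2 : r * ((1 - q) * p) = r * p := by
      rw [← mul_assoc, mul_sub, hrq]; simp
    rw [add_mul, ← h2, h1, sub_mul, one_mul]; abel
  · rw [add_mul, hq.2.1.1, hrq, add_zero]

lemma tf_finite {p : H →L[ℂ] H} (hp : IsTauFiniteProjection M τ p) : IsFiniteProjection M p := by
  refine ⟨hp.1, hp.2.1, ?_⟩
  rintro q hq hq' hpq ⟨v, hv, hv1, hv2⟩
  have e1 : τ q = τ p := by rw [← hv1, ← hv2]; exact hτ.tracial v hv
  have hd := proj_sub hp.2.1 hq' hpq
  have e2 := hτ.additive q (p - q) hq (sub_mem hp.1 hq) (proj_nonneg hq') (proj_nonneg hd)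
  rw [add_sub_cancel, e1] at e2
  have e3 : τ (p - q) = 0 := by
    have h : τ p + 0 = τ p + τ (p - q) := by rw [add_zero]; exact e2
    exact ((ENNReal.add_right_inj hp.2.2.ne).1 h).symm
  have := hτ.faithful _ (sub_mem hp.1 hq) (proj_nonneg hd) e3
  exact (sub_eq_zero.1 this).symm

/-- Enlarge `p` to a `τ`-finite projection commuting with `e`. -/
lemma tf_comm_step {p e : H →L[ℂ] H} (hp : IsTauFiniteProjection M τ p) (he : e ∈ M)
    (he' : IsProjection e) :
    ∃ P, IsTauFiniteProjection M τ P ∧ P * p = p ∧ e * P = P * e ∧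
      ∀ y, star y = y → y * e = e * y → y * p = p * y → y * P = P * y := by
  obtain ⟨r1, hr1, hr1'⟩ := tf_range hτ (x := e * p) hp (mul_mem he hp.1)
    (by rw [mul_assoc, hp.2.1.1])
  obtain ⟨r2, hr2, hr2'⟩ := tf_range hτ (x := (1 - e) * p) hp
    (mul_mem (sub_mem (one_mem M) he) hp.1) (by rw [mul_assoc, hp.2.1.1])
  have a1 : (1 - e) * r1 = 0 := hr1'.2.2 _ (by rw [← mul_assoc, sub_mul, he'.1]; simp)
  have a2 : e * r2 = 0 := hr2'.2.2 _ (by rw [← mul_assoc, mul_sub, he'.1]; simp)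
  have a1' : e * r1 = r1 := by
    rw [sub_mul, one_mul, sub_eq_zero] at a1; exact a1.symm
  have b1 : r1 * e = r1 := star_comm_proj he' hr1.2.1 hr1.2.1 a1'
  have b2 : r2 * e = 0 := star_comm_proj he' hr2.2.1 proj_zero a2
  have h12 : r1 * r2 = 0 := by rw [← b1, mul_assoc, a2, mul_zero]
  refine ⟨r1 + r2, tf_add hτ hr1 hr2 h12, ?_, ?_, ?_⟩
  · have c1 : r1 * p = e * p := by
      have := hr1'.2.1
      rw [← mul_assoc, b1] at this; exact this
    have c2 : r2 * p = (1 - e) * p := by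
      have := hr2'.2.1
      rw [← mul_assoc, mul_sub, b2] at this; simpa using this
    rw [add_mul, c1, c2, sub_mul, one_mul]; abel
  · rw [mul_add, add_mul, a1', a2, b1, b2]
  · intro y hy h1 h2
    have k1 : y * (e * p) = e * p * y := by
      rw [← mul_assoc, h1, mul_assoc, h2, mul_assoc]
    have k2 : y * ((1 - e) * p) = (1 - e) * p * y := by
      rw [sub_mul, mul_sub, sub_mul, k1, one_mul, h2]
    rw [mul_add, add_mul, hr1'.commute k1 (by rw [hy]; exact k1),
      hr2'.commute k2 (by rw [hy]; exact k2)]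

lemma tf_comm_finset (F : Finset (H →L[ℂ] H)) (hF : ∀ e ∈ F, e ∈ M ∧ IsProjection e)
    (hc : ∀ e ∈ F, ∀ f ∈ F, e * f = f * e) {p : H →L[ℂ] H}
    (hp : IsTauFiniteProjection M τ p) :
    ∃ P, IsTauFiniteProjection M τ P ∧ P * p = p ∧ ∀ e ∈ F, e * P = P * e := by
  classical
  induction F using Finset.induction_on with
  | empty => exact ⟨p, hp, hp.2.1.1, by simp⟩
  | insert e F _ ih =>
    obtain ⟨P, hP, hPp, hPF⟩ := ih (fun e he => hF e (Finset.mem_insert_of_mem he))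
      (fun e he f hf => hc e (Finset.mem_insert_of_mem he) f (Finset.mem_insert_of_mem hf))
    have he := hF e (Finset.mem_insert_self _ _)
    obtain ⟨Q, hQ, hQP, hQe, hQc⟩ := tf_comm_step hτ hP he.1 he.2
    refine ⟨Q, hQ, by rw [← hPp, ← mul_assoc, hQP], ?_⟩
    intro f hf
    rcases Finset.mem_insert.1 hf with rfl | hf'
    · exact hQe
    · exact hQc f (hF f hf).2.2 (hc f hf e (Finset.mem_insert_self _ _)) (hPF f hf')

end trace

lemma exists_spec {a : H →L[ℂ] H} (ha : star a = a) (t : ℝ) :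
    ∃ e : H →L[ℂ] H, IsProjection e ∧ (∀ y, y * a = a * y → y * e = e * y) ∧
      0 ≤ (a - t • 1) * e ∧ (a - t • 1) * (1 - e) ≤ 0 := by
  set x : H →L[ℂ] H := a - t • 1 with hx
  have hxsa : IsSelfAdjoint x := by
    rw [isSelfAdjoint_iff, hx]; simp [ha]
  have hpsa : star (x⁺) = x⁺ := (CFC.posPart_nonneg x).isSelfAdjoint.star_eq
  obtain ⟨e, he⟩ := exists_rangeProj (x⁺)
  have h1 : x⁻ * e = 0 := he.2.2 _ (CFC.negPart_mul_posPart x)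
  have h2 : x⁺ * e = x⁺ := by
    have := congrArg star he.2.1
    simpa [hpsa, he.1.2] using this
  have h3 : x = x⁺ - x⁻ := (CFC.posPart_sub_negPart x hxsa).symm
  have h4 : x * e = x⁺ := by
    conv_lhs => rw [h3]
    rw [sub_mul, h1, h2, sub_zero]
  refine ⟨e, he.1, ?_, ?_, ?_⟩
  · intro y hy
    apply he.commute_sa hpsa
    have h5 : Commute x y := by
      rw [commute_iff_eq, hx, sub_mul, mul_sub, hy]; simp
    have : Commute (x⁺) y := by
      rw [CFC.posPart_def]
      exact h5.cfcₙ_real _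
    exact this.symm
  · rw [h4]; exact CFC.posPart_nonneg x
  · rw [mul_sub, h4, mul_one]
    have h6 := CFC.negPart_nonneg x
    have h7 : x - x⁺ = - x⁻ := by rw [sub_eq_iff_eq_add]; nth_rewrite 1 [h3]; abel
    rw [h7]
    exact neg_nonpos.2 h6

lemma conj_proj_nonneg {a e : H →L[ℂ] H} (ha : 0 ≤ a) (he : IsProjection e)
    (h : a * e = e * a) : 0 ≤ a * e := by
  have := star_left_conjugate_nonneg ha e
  rwa [he.2, ← h, mul_assoc, he.1] at this

lemma exists_bisect {a : H →L[ℂ] H} {L : ℝ} (h0 : 0 ≤ a) (hL : a ≤ L • 1) :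
    ∃ e : H →L[ℂ] H, IsProjection e ∧ (∀ y, y * a = a * y → y * e = e * y) ∧
      0 ≤ a - (L / 2) • e ∧ a - (L / 2) • e ≤ (L / 2) • 1 := by
  obtain ⟨e, he, hc, h1, h2⟩ := exists_spec h0.isSelfAdjoint.star_eq (L / 2)
  have hae := hc a rfl
  refine ⟨e, he, hc, ?_, ?_⟩
  · have h3 : 0 ≤ a * (1 - e) :=
      conj_proj_nonneg h0 (proj_one_sub he) (by rw [mul_sub, sub_mul, hae]; simp)
    have h4 := add_nonneg h1 h3
    have : (a - (L / 2) • 1) * e + a * (1 - e) = a - (L / 2) • e := by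
      rw [sub_mul, mul_sub]; simp
    rwa [this] at h4
  · have h3 : 0 ≤ (L • 1 - a) * e :=
      conj_proj_nonneg (sub_nonneg.2 hL) he (by rw [mul_sub, sub_mul, hae]; simp)
    have h4 := add_nonneg h3 (neg_nonneg.2 h2)
    rw [← sub_nonneg]
    have : (L • 1 - a) * e + -((a - (L / 2) • 1) * (1 - e))
        = (L / 2) • 1 - (a - (L / 2) • e) := by
      have hLL : L • e = (L / 2) • e + (L / 2) • e := by rw [← add_smul]; simp
      simp only [sub_mul, mul_sub, smul_mul_assoc, one_mul, mul_one, hLL]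
      abel
    rwa [this] at h4

lemma norm_le_of_le {a : H →L[ℂ] H} {L : ℝ} (hL0 : 0 ≤ L) (h0 : 0 ≤ a) (hL : a ≤ L • 1) :
    ‖a‖ ≤ L := by
  rw [CStarAlgebra.norm_le_iff_le_algebraMap a hL0 h0, Algebra.algebraMap_eq_smul_one]
  exact hL

lemma exists_approx_aux (N : ℕ) : ∀ {a : H →L[ℂ] H} {L : ℝ}, 0 ≤ L → 0 ≤ a → a ≤ L • 1 →
    ∃ (F : Finset (H →L[ℂ] H)) (d : H →L[ℂ] H),
      (∀ e ∈ F, IsProjection e ∧ ∀ y, y * a = a * y → y * e = e * y) ∧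
      (∀ y, (∀ e ∈ F, y * e = e * y) → y * d = d * y) ∧ ‖a - d‖ ≤ L / 2 ^ N := by
  classical
  induction N with
  | zero =>
    intro a L hL0 h0 hL
    exact ⟨∅, 0, by simp, by simp, by simpa using norm_le_of_le hL0 h0 hL⟩
  | succ N ih =>
    intro a L hL0 h0 hL
    obtain ⟨e, he, hc, h1, h2⟩ := exists_bisect h0 hL
    obtain ⟨F, d, hF, hd, hn⟩ := ih (by positivity) h1 h2
    refine ⟨insert e F, d + (L / 2) • e, ?_, ?_, ?_⟩
    · intro f hf
      rcases Finset.mem_insert.1 hf with rfl | hf'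
      · exact ⟨he, hc⟩
      · refine ⟨(hF f hf').1, fun y hy => (hF f hf').2 y ?_⟩
        have := hc y hy
        rw [mul_sub, sub_mul, hy, mul_smul_comm, smul_mul_assoc, this]
    · intro y hy
      have k1 := hd y (fun f hf => hy f (Finset.mem_insert_of_mem hf))
      have k2 := hy e (Finset.mem_insert_self _ _)
      rw [mul_add, add_mul, k1, mul_smul_comm, smul_mul_assoc, k2]
    · have e1 : a - (d + (L / 2) • e) = a - (L / 2) • e - d := by abel
      rw [e1]
      refine hn.trans (le_of_eq ?_)
      rw [pow_succ]; field_simp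

lemma exists_approx {a : H →L[ℂ] H} (ha : star a = a) {ε : ℝ} (hε : 0 < ε) :
    ∃ (F : Finset (H →L[ℂ] H)) (d : H →L[ℂ] H),
      (∀ e ∈ F, IsProjection e ∧ ∀ y, y * a = a * y → y * e = e * y) ∧
      (∀ y, (∀ e ∈ F, y * e = e * y) → y * d = d * y) ∧ ‖a - d‖ ≤ ε := by
  set L : ℝ := 2 * ‖a‖ with hLd
  have hsa : IsSelfAdjoint a := ha
  have h0 : 0 ≤ a + ‖a‖ • 1 := by
    have := hsa.neg_algebraMap_norm_le_self
    rw [Algebra.algebraMap_eq_smul_one] at this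
    have h2 := sub_nonneg.2 this
    simpa using h2
  have hL : a + ‖a‖ • 1 ≤ L • 1 := by
    have := hsa.le_algebraMap_norm_self
    rw [Algebra.algebraMap_eq_smul_one] at this
    have h2 : a + ‖a‖ • 1 ≤ ‖a‖ • 1 + ‖a‖ • 1 := by gcongr
    rwa [← add_smul, ← two_mul] at h2
  have hL0 : 0 ≤ L := by positivity
  obtain ⟨N, hN⟩ : ∃ N : ℕ, L / 2 ^ N ≤ ε := by
    obtain ⟨N, hN⟩ := pow_unbounded_of_one_lt (L / ε) (one_lt_two (α := ℝ))
    refine ⟨N, ?_⟩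
    rw [div_le_iff₀ (by positivity)]
    rw [div_lt_iff₀ hε] at hN
    linarith
  obtain ⟨F, d, hF, hd, hn⟩ := exists_approx_aux N hL0 h0 hL
  refine ⟨F, d - ‖a‖ • 1, ?_, ?_, ?_⟩
  · intro e he
    refine ⟨(hF e he).1, fun y hy => (hF e he).2 y ?_⟩
    rw [mul_add, add_mul, hy]; simp
  · intro y hy
    rw [mul_sub, sub_mul, hd y hy]; simp
  · have : a - (d - ‖a‖ • 1) = a + ‖a‖ • 1 - d := by abel
    rw [this]; exact hn.trans hN

/-- In a semifinite algebra every nonzero projection dominates a nonzero `τ`-finite one. -/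
lemma exists_tf_sub {M : VonNeumannAlgebra H} {τ : (H →L[ℂ] H) → ENNReal} (hτ : IsFNSTrace M τ)
    {q : H →L[ℂ] H} (hq : q ∈ M) (hq' : IsProjection q) (hq0 : q ≠ 0) :
    ∃ e, IsTauFiniteProjection M τ e ∧ e ≠ 0 ∧ q * e = e := by
  obtain ⟨y, hy, hy0, hyq, hyne, hyt⟩ := hτ.semifinite q hq (proj_nonneg hq') hq0
  set t := ‖y‖ / 2 with ht
  have hyn : 0 < ‖y‖ := norm_pos_iff.2 hyne
  have ht0 : 0 < t := by positivity
  obtain ⟨e, he, hc, h1, h2⟩ := exists_spec hy0.isSelfAdjoint.star_eq t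
  have hye := hc y rfl
  have heM : e ∈ M := mem_of_commutant fun z hz => hc z (comm_of_commutant hy hz)
  have hey : t • e ≤ y := by
    have h3 : 0 ≤ y * (1 - e) :=
      conj_proj_nonneg hy0 (proj_one_sub he) (by rw [mul_sub, sub_mul, hye]; simp)
    have h4 := add_nonneg h1 h3
    have : (y - t • 1) * e + y * (1 - e) = y - t • e := by
      rw [sub_mul, mul_sub]; simp
    rw [this] at h4
    exact sub_nonneg.1 h4
  have hte : 0 ≤ t • e := smul_nonneg ht0.le (proj_nonneg he)
  have hteM : t • e ∈ M := by
    have : ((t : ℂ) • e) ∈ M.toStarSubalgebra := M.toStarSubalgebra.smul_mem heM _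
    exact this
  refine ⟨e, ⟨heM, he, ?_⟩, ?_, ?_⟩
  · have k1 := tau_mono hτ hteM hy hte hey
    rw [hτ.homogeneous t e ht0.le heM (proj_nonneg he)] at k1
    have k2 := lt_of_le_of_lt k1 hyt
    by_contra hcon
    rw [not_lt, top_le_iff] at hcon
    rw [hcon, ENNReal.mul_top (by simpa using ht0)] at k2
    exact lt_irrefl _ k2
  · rintro rfl
    have k1 : y ≤ t • 1 := by
      rw [sub_zero, mul_one] at h2
      exact sub_nonpos.1 h2
    have := norm_le_of_le ht0.le hy0 k1
    linarith
  · have k1 : t • e ≤ q := hey.trans hyq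
    have k2 : 0 ≤ star (1 - q) * (q - t • e) * (1 - q) :=
      star_left_conjugate_nonneg (sub_nonneg.2 k1) (1 - q)
    have k3 : 0 ≤ star (1 - q) * (t • e) * (1 - q) := star_left_conjugate_nonneg hte (1 - q)
    have hqq : q * (1 - q) = 0 := by rw [mul_sub, hq'.1]; simp
    have k4 : star (1 - q) * (t • e) * (1 - q) = 0 := by
      refine le_antisymm ?_ k3
      rw [mul_sub (star (1 - q)), sub_mul, mul_assoc _ q, hqq, mul_zero, zero_sub] at k2
      exact neg_nonneg.1 k2
    have k5 : star (e * (1 - q)) * (e * (1 - q)) = 0 := by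
      have : t • (star (e * (1 - q)) * (e * (1 - q))) = 0 := by
        rw [← k4, star_mul, he.2, mul_assoc, ← mul_assoc e, he.1]
        simp [mul_assoc]
      exact (smul_eq_zero.1 this).resolve_left ht0.ne'
    have k6 := CStarRing.star_mul_self_eq_zero_iff _ |>.1 k5
    rw [mul_sub, mul_one, sub_eq_zero] at k6
    exact star_comm_proj he hq' he k6.symm

lemma pi_eq {w : H →L[ℂ] H} (h : IsProjection (star w * w)) : w * star w * w = w := by
  have h1 : star w * w * (star w * w) = star w * w := h.1
  have h0 : star (w - w * star w * w) * (w - w * star w * w) = 0 := by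
    have e1 : star w * (w * star w * w) = star w * w := by
      rw [← h1]; simp only [mul_assoc]
    have e3 : star w * (w * star w) * (w * star w * w) = star w * w := by
      calc star w * (w * star w) * (w * star w * w)
          = (star w * w * (star w * w)) * (star w * w) := by simp only [mul_assoc]
        _ = star w * w := by rw [h1, h1]
    have e4 : star w * (w * star w) * w = star w * w := by
      rw [← h1]; simp only [mul_assoc]
    simp only [star_sub, star_mul, star_star, mul_sub, sub_mul, e1, e3, e4]
    simp
  have := CStarRing.star_mul_self_eq_zero_iff _ |>.1 h0
  exact (sub_eq_zero.1 this).symm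

lemma pi_star {w : H →L[ℂ] H} (h : IsProjection (star w * w)) : IsProjection (w * star w) :=
  ⟨by rw [← mul_assoc, pi_eq h], by simp⟩

lemma pi_star_eq {w : H →L[ℂ] H} (h : IsProjection (star w * w)) :
    star w * w * star w = star w := by
  have := congrArg star (pi_eq h)
  simpa [mul_assoc] using this

lemma proj_norm_le {p : H →L[ℂ] H} (h : IsProjection p) : ‖p‖ ≤ 1 := by
  have e : ‖p‖ * ‖p‖ = ‖p‖ := by
    have := CStarRing.norm_star_mul_self (x := p)
    rw [h.2, h.1] at this
    exact this.symm
  by_contra hc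
  nlinarith

lemma pi_norm_le {w : H →L[ℂ] H} (h : IsProjection (star w * w)) : ‖w‖ ≤ 1 := by
  have e := CStarRing.norm_star_mul_self (x := w)
  have := proj_norm_le h
  rw [e] at this
  by_contra hc
  nlinarith

section strong
variable {ι : Type*} {w : ι → (H →L[ℂ] H)}

lemma finset_sum_star_mul (h1 : ∀ i j, i ≠ j → star (w i) * w j = 0) (s : Finset ι) :
    star (∑ i ∈ s, w i) * (∑ i ∈ s, w i) = ∑ i ∈ s, star (w i) * w i := by
  classical
  rw [star_sum, Finset.sum_mul_sum]
  refine Finset.sum_congr rfl fun i hi => ?_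
  rw [Finset.sum_eq_single i]
  · intro j _ hj
    exact h1 i j hj.symm
  · intro h; exact absurd hi h

lemma finset_sum_proj {p : ι → (H →L[ℂ] H)} (hp : ∀ i, IsProjection (p i))
    (h : ∀ i j, i ≠ j → p i * p j = 0) (s : Finset ι) : IsProjection (∑ i ∈ s, p i) := by
  have h1 : star (∑ i ∈ s, p i) = ∑ i ∈ s, p i := by
    rw [star_sum]; exact Finset.sum_congr rfl fun i _ => (hp i).2
  refine ⟨?_, h1⟩
  have := finset_sum_star_mul (w := p) (fun i j hij => by rw [(hp i).2]; exact h i j hij) s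
  rw [h1] at this
  rw [this]
  exact Finset.sum_congr rfl fun i _ => by rw [(hp i).2, (hp i).1]

lemma finset_sum_pi (h1 : ∀ i j, i ≠ j → star (w i) * w j = 0)
    (h2 : ∀ i j, i ≠ j → w i * star (w j) = 0) (hp : ∀ i, IsProjection (star (w i) * w i))
    (s : Finset ι) : IsProjection (star (∑ i ∈ s, w i) * (∑ i ∈ s, w i)) := by
  rw [finset_sum_star_mul h1]
  apply finset_sum_proj hp
  intro i j hij
  rw [mul_assoc, ← mul_assoc (w i), h2 i j hij]; simp

lemma pi_summable (h1 : ∀ i j, i ≠ j → star (w i) * w j = 0)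
    (h2 : ∀ i j, i ≠ j → w i * star (w j) = 0) (hp : ∀ i, IsProjection (star (w i) * w i))
    (ξ : H) : Summable (fun i => w i ξ) := by
  have hV : OrthogonalFamily ℂ (fun i => LinearMap.range (w i : H →ₗ[ℂ] H))
      (fun i => (LinearMap.range (w i : H →ₗ[ℂ] H)).subtypeₗᵢ) := by
    intro i j hij
    rintro ⟨_, x, rfl⟩ ⟨_, y, rfl⟩
    show inner ℂ (w i x) (w j y) = 0
    rw [← ContinuousLinearMap.adjoint_inner_right, ← ContinuousLinearMap.star_eq_adjoint,
      ← mulA, h1 i j hij]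
    simp
  let f : ∀ i, LinearMap.range (w i : H →ₗ[ℂ] H) := fun i => ⟨w i ξ, ξ, rfl⟩
  have key := (hV.summable_iff_norm_sq_summable f).2 ?_
  · exact key
  · apply summable_of_sum_le (c := ‖ξ‖ ^ 2)
    · intro i; positivity
    · intro s
      rw [← hV.norm_sum f s]
      have e : ∑ i ∈ s, (LinearMap.range (w i : H →ₗ[ℂ] H)).subtypeₗᵢ (f i)
          = (∑ i ∈ s, w i) ξ := by
        rw [_root_.sum_apply]; rfl
      rw [e]
      have := (∑ i ∈ s, w i).le_of_opNorm_le (pi_norm_le (finset_sum_pi h1 h2 hp s)) ξ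
      rw [one_mul] at this
      gcongr

/-- Strong sums of orthogonal partial isometries. -/
lemma strong_sum {M : VonNeumannAlgebra H} (hM : ∀ i, w i ∈ M)
    (h1 : ∀ i j, i ≠ j → star (w i) * w j = 0)
    (h2 : ∀ i j, i ≠ j → w i * star (w j) = 0) (hp : ∀ i, IsProjection (star (w i) * w i)) :
    ∃ W ∈ M, (∀ ξ, HasSum (fun i => w i ξ) (W ξ)) ∧ (∀ i, W * star (w i) = w i * star (w i)) ∧
      (∀ i, star (w i) * W = star (w i) * w i) ∧ IsProjection (star W * W) ∧
      (∀ y z : H →L[ℂ] H, (∀ i, y * w i = z * w i) → y * W = z * W) ∧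
      (∀ y z : H →L[ℂ] H, (∀ i, w i * y = w i * z) → W * y = W * z) := by
  have hs := pi_summable h1 h2 hp
  let W : H →L[ℂ] H := LinearMap.mkContinuous
    { toFun := fun ξ => ∑' i, w i ξ
      map_add' := fun ξ η => by
        simp only [map_add]
        exact (hs ξ).tsum_add (hs η)
      map_smul' := fun c ξ => by
        simp only [map_smul, RingHom.id_apply]
        exact (hs ξ).tsum_const_smul c } 1 (fun ξ => by
      rw [one_mul]
      refine le_of_tendsto (hs ξ).hasSum.norm (Eventually.of_forall fun s => ?_)
      have := (∑ i ∈ s, w i).le_of_opNorm_le (pi_norm_le (finset_sum_pi h1 h2 hp s)) ξ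
      rwa [one_mul, _root_.sum_apply] at this)
  have hW : ∀ ξ, HasSum (fun i => w i ξ) (W ξ) := fun ξ => (hs ξ).hasSum
  have hL : ∀ y z : H →L[ℂ] H, (∀ i, y * w i = z * w i) → y * W = z * W := by
    intro y z hyz
    ext ξ
    have a := (hW ξ).mapL y
    have b := (hW ξ).mapL z
    have e : (fun i => y (w i ξ)) = fun i => z (w i ξ) := by
      funext i; rw [← mulA, hyz, mulA]
    rw [e] at a
    exact a.unique b
  have hR : ∀ y z : H →L[ℂ] H, (∀ i, w i * y = w i * z) → W * y = W * z := by
    intro y z hyz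
    ext ξ
    have a := hW (y ξ)
    have b := hW (z ξ)
    have e : (fun i => w i (y ξ)) = fun i => w i (z ξ) := by
      funext i; rw [← mulA, hyz, mulA]
    rw [e] at a
    exact a.unique b
  have hA : ∀ i, W * star (w i) = w i * star (w i) := by
    intro i
    ext ξ
    have a := hW (star (w i) ξ)
    refine a.unique ?_
    refine hasSum_single i fun j hj => ?_
    rw [← mulA, h2 j i hj]; simp
  have hB : ∀ i, star (w i) * W = star (w i) * w i := by
    intro i
    ext ξ
    have a := (hW ξ).mapL (star (w i))
    refine a.unique ?_
    refine hasSum_single i fun j hj => ?_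
    rw [← mulA, h1 i j hj.symm]; simp
  refine ⟨W, ?_, hW, hA, hB, ?_, hL, hR⟩
  · apply mem_of_commutant
    intro y hy
    ext ξ
    have a := (hW ξ).mapL y
    have b := hW (y ξ)
    have e : (fun i => y (w i ξ)) = fun i => w i (y ξ) := by
      funext i; rw [← mulA, comm_of_commutant (hM i) hy, mulA]
    rw [e] at a
    exact a.unique b
  · refine ⟨?_, by simp⟩
    have e : (W * star W) * W = 1 * W := by
      apply hL
      intro i
      have b := congrArg star (hB i)
      simp only [star_mul, star_star] at b
      rw [mul_assoc, b, one_mul, ← mul_assoc, hA, pi_eq (hp i)]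
    rw [one_mul] at e
    rw [mul_assoc, ← mul_assoc W, e]

end strong

lemma exists_max_family {X : Type*} (P : X → Prop) (Q : X → X → Prop) :
    ∃ S : Set X, (∀ w ∈ S, P w) ∧ (∀ w ∈ S, ∀ w' ∈ S, w ≠ w' → Q w w') ∧
      ∀ u, P u → (∀ w ∈ S, Q u w ∧ Q w u) → u ∈ S := by
  obtain ⟨m, hm⟩ := zorn_subset
    {S : Set X | (∀ w ∈ S, P w) ∧ (∀ w ∈ S, ∀ w' ∈ S, w ≠ w' → Q w w')} (by
      intro c hc hch
      refine ⟨⋃₀ c, ⟨?_, ?_⟩, fun s hs => Set.subset_sUnion_of_mem hs⟩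
      · rintro w ⟨s, hs, hw⟩
        exact (hc hs).1 w hw
      · rintro w ⟨s, hs, hw⟩ w' ⟨s', hs', hw'⟩ hne
        rcases hch.total hs hs' with h | h
        · exact (hc hs').2 w (h hw) w' hw' hne
        · exact (hc hs).2 w hw w' (h hw') hne)
  refine ⟨m, hm.prop.1, hm.prop.2, ?_⟩
  intro u hu hq
  have h2 : insert u m ∈ {S : Set X | (∀ w ∈ S, P w) ∧ (∀ w ∈ S, ∀ w' ∈ S, w ≠ w' → Q w w')} := by
    refine ⟨?_, ?_⟩
    · rintro w (rfl | hw)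
      · exact hu
      · exact hm.prop.1 w hw
    · rintro w (rfl | hw) w' (rfl | hw') hne
      · exact absurd rfl hne
      · exact (hq w' hw').1
      · exact (hq w hw).2
      · exact hm.prop.2 w hw w' hw' hne
  exact hm.le_of_ge h2 (Set.subset_insert _ _) (Set.mem_insert _ _)

/-- The central cover of `f`. -/
lemma exists_central (M : VonNeumannAlgebra H) (f q : H →L[ℂ] H) (hf : f ∈ M)
    (h : ∀ x ∈ M, q * x * f = 0) :
    ∃ z, IsCentralProjection M z ∧ z * f = f ∧ q * z = 0 := by
  set T : Set H := {η | ∃ x ∈ M, ∃ ξ, η = x (f ξ)} with hT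
  set U : Submodule ℂ H := (Submodule.span ℂ T).topologicalClosure with hU
  have hTU : ∀ η ∈ T, η ∈ U := fun η hη =>
    Submodule.le_topologicalClosure _ (Submodule.subset_span hη)
  have hinv : ∀ y : H →L[ℂ] H, (∀ η ∈ T, y η ∈ T) → ∀ η ∈ U, y η ∈ U := by
    intro y hy
    have h1 : U ≤ U.comap (y : H →ₗ[ℂ] H) := by
      apply Submodule.topologicalClosure_minimal
      · rw [Submodule.span_le]
        intro η hη
        exact hTU _ (hy η hη)
      · exact (Submodule.isClosed_topologicalClosure _).preimage y.continuous
    exact fun η hη => h1 hη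
  have hp : IsProjection U.starProjection := isProj_starProjection U
  have hcomm : ∀ y : H →L[ℂ] H, (∀ η ∈ T, y η ∈ T) → (∀ η ∈ T, star y η ∈ T) →
      y * U.starProjection = U.starProjection * y := by
    intro y hy hy'
    have key : ∀ y : H →L[ℂ] H, (∀ η ∈ T, y η ∈ T) →
        U.starProjection * y * U.starProjection = y * U.starProjection := by
      intro y hy
      ext ξ
      simp only [mulA]
      rw [Submodule.starProjection_eq_self_iff]
      exact hinv y hy _ (Submodule.starProjection_apply_mem U ξ)
    have a := key y hy
    have b := congrArg star (key _ hy')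
    simp only [star_mul, star_star, hp.2] at b
    rw [← a, mul_assoc, b]
  refine ⟨U.starProjection, ⟨hp, ?_, ?_⟩, ?_, ?_⟩
  · apply mem_of_commutant
    have k : ∀ y ∈ M.commutant, ∀ η ∈ T, y η ∈ T := by
      rintro y hy _ ⟨x, hx, ξ, rfl⟩
      refine ⟨x, hx, y ξ, ?_⟩
      rw [← mulA, comm_of_commutant hx hy, mulA, ← mulA y f, comm_of_commutant hf hy, mulA]
    intro y hy
    exact hcomm y (k y hy) (k _ (star_commutant hy))
  · have k : ∀ y ∈ M, ∀ η ∈ T, y η ∈ T := by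
      rintro y hy _ ⟨x, hx, ξ, rfl⟩
      exact ⟨y * x, mul_mem hy hx, ξ, rfl⟩
    intro y hy
    exact (hcomm y (k y hy) (k _ (star_mem hy))).symm
  · ext ξ
    simp only [mulA]
    rw [Submodule.starProjection_eq_self_iff]
    exact hTU _ ⟨1, one_mem M, ξ, rfl⟩
  · ext ξ
    have h1 : U ≤ LinearMap.ker (q : H →ₗ[ℂ] H) := by
      apply Submodule.topologicalClosure_minimal
      · rw [Submodule.span_le]
        rintro _ ⟨x, hx, ξ, rfl⟩
        have := congrArg (fun T : H →L[ℂ] H => T ξ) (h x hx)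
        simpa [mulA] using this
      · exact q.isClosed_ker
    exact h1 (Submodule.starProjection_apply_mem U ξ)

section base
variable {M : VonNeumannAlgebra H} {τ : (H →L[ℂ] H) → ENNReal} (hτ : IsFNSTrace M τ)
include hτ

/-- A `τ`-finite projection under `E` embeds into `E` away from `R`. -/
lemma exists_embed {E f R : H →L[ℂ] H} (hE : E ∈ M) (hE' : IsProjection E)
    (hz : ∀ z, IsCentralProjection M z → IsTauFiniteProjection M τ (z * E) → z * E = 0)
    (hf : IsTauFiniteProjection M τ f) (hEf : E * f = f) (hR : IsTauFiniteProjection M τ R) :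
    ∃ w ∈ M, star w * w = f ∧ E * w = w ∧ R * w = 0 := by
  obtain ⟨R', hR', hRR⟩ := tf_range hτ (x := E * R) hR (mul_mem hE hR.1)
    (by rw [mul_assoc, hR.2.1.1])
  have hER : E * R' = R' := by
    have := hRR.left_eq (y := E) (z := 1) (by rw [← mul_assoc, hE'.1, one_mul])
    rwa [one_mul] at this
  set q := E - R' with hq
  have hqM : q ∈ M := sub_mem hE hR'.1
  have hqp : IsProjection q := proj_sub hE' hR'.2.1 hER
  have hEq : E * q = q := by rw [hq, mul_sub, hE'.1, hER]
  have hRE : R * E * R' = R * E := by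
    have := congrArg star hRR.2.1
    simpa [hR.2.1.2, hE'.2, hR'.2.1.2] using this
  have hRq : R * q = 0 := by
    rw [hq, mul_sub, ← hRE, mul_assoc R E, hER, sub_self]
  obtain ⟨S, hS1, hS2, hS3⟩ := exists_max_family
    (fun w : H →L[ℂ] H => w ∈ M ∧ w ≠ 0 ∧ IsProjection (star w * w) ∧ q * w = w ∧ w * f = w)
    (fun w w' => star w * w' = 0 ∧ w * star w' = 0)
  obtain ⟨W, hWM, -, hA, hB, hWp, hL, hRt⟩ := strong_sum (M := M) (w := fun i : S => (i : H →L[ℂ] H))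
    (fun i => (hS1 i i.2).1)
    (fun i j hij => (hS2 i i.2 j j.2 (fun h => hij (Subtype.ext h))).1)
    (fun i j hij => (hS2 i i.2 j j.2 (fun h => hij (Subtype.ext h))).2)
    (fun i => (hS1 i i.2).2.2.1)
  have hqW : q * W = W := by
    have := hL q 1 (fun i => by rw [one_mul]; exact (hS1 i i.2).2.2.2.1)
    rwa [one_mul] at this
  have hWf : W * f = W := by
    have := hRt f 1 (fun i => by rw [mul_one]; exact (hS1 i i.2).2.2.2.2)
    rwa [mul_one] at this
  have hfW : f * (star W * W) = star W * W := by
    have := congrArg star hWf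
    rw [star_mul, hf.2.1.2] at this
    rw [← mul_assoc, this]
  set f0 := f - star W * W with hf0
  set q0 := q - W * star W with hq0
  have hf0p : IsProjection f0 := proj_sub hf.2.1 hWp hfW
  have hq0p : IsProjection q0 := proj_sub hqp (pi_star hWp) (by rw [← mul_assoc, hqW])
  have hf0M : f0 ∈ M := sub_mem hf.1 (mul_mem (star_mem hWM) hWM)
  have hq0M : q0 ∈ M := sub_mem hqM (mul_mem hWM (star_mem hWM))
  have hqq0 : q * q0 = q0 := by rw [hq0, mul_sub, hqp.1, ← mul_assoc, hqW]
  have hff0 : f0 * f = f0 := by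
    rw [hf0, sub_mul, hf.2.1.1, mul_assoc, hWf]
  have hzero : ∀ x ∈ M, q0 * x * f0 = 0 := by
    intro x hx
    by_contra hne
    obtain ⟨v, hv, hv1, hv2, hv3, hv4⟩ := exists_polar (mul_mem (mul_mem hq0M hx) hf0M)
    have a1 : q0 * v = v := by
      have := hv2.left_eq (y := q0) (z := 1)
        (by rw [one_mul, mul_assoc q0, ← mul_assoc q0 q0, hq0p.1])
      rw [one_mul] at this
      rw [← pi_eq hv1, ← mul_assoc, this]
    have a2 : v * f0 = v := by
      have := hv4 (1 - f0) (by rw [mul_assoc, mul_sub, hf0p.1]; simp)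
      rw [mul_sub, mul_one, sub_eq_zero] at this
      rw [← pi_eq hv1, mul_assoc v, mul_assoc v, ← this]
    have hv0 : v ≠ 0 := by
      rintro rfl
      apply hne
      rw [← hv2.2.1]; simp
    have hvS : v ∈ S := by
      refine hS3 v ⟨hv, hv0, hv1, by rw [← a1, ← mul_assoc, hqq0],
        by rw [← a2, mul_assoc, hff0]⟩ ?_
      intro w hw
      obtain ⟨hwM, hw0, hwp, hqw, hwf⟩ := hS1 w hw
      have hA' : W * star w = w * star w := hA ⟨w, hw⟩
      have hB' : star w * W = star w * w := hB ⟨w, hw⟩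
      have hB'' : star W * w = star w * w := by
        have := congrArg star hB'
        simpa using this
      have b1 : q0 * w = 0 := by
        rw [hq0, sub_mul, hqw, mul_assoc, hB'', ← mul_assoc, hA', pi_eq hwp, sub_self]
      have b2 : f0 * star w = 0 := by
        have hfw : f * star w = star w := by
          have := congrArg star hwf
          simpa [hf.2.1.2] using this
        rw [hf0, sub_mul, hfw, mul_assoc, hA', ← mul_assoc, hB'', pi_star_eq hwp, sub_self]
      have c1 : star v * w = 0 := by
        rw [← a1, star_mul, hq0p.2, mul_assoc, b1, mul_zero]
      have c2 : v * star w = 0 := by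
        rw [← a2, mul_assoc, b2, mul_zero]
      refine ⟨⟨c1, c2⟩, ?_, ?_⟩
      · have := congrArg star c1
        simpa using this
      · have := congrArg star c2
        simpa using this
    have hA' : W * star v = v * star v := hA ⟨v, hvS⟩
    have : f0 * star v = 0 := by
      have hfw : f * star v = star v := by
        have := congrArg star (hS1 v hvS).2.2.2.2
        simpa [hf.2.1.2] using this
      have hB' : star v * W = star v * v := hB ⟨v, hvS⟩
      have hB'' : star W * v = star v * v := by
        have := congrArg star hB'
        simpa using this
      rw [hf0, sub_mul, hfw, mul_assoc, hA', ← mul_assoc, hB'', pi_star_eq hv1, sub_self]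
    have h2 := congrArg star this
    rw [star_mul, star_star, hf0p.2, a2, star_zero] at h2
    exact hv0 h2
  obtain ⟨z, hzc, hzf, hqz⟩ := exists_central M f0 q0 hf0M hzero
  have hzM : z ∈ M := hzc.2.1
  have hzp := hzc.1
  have hzq : z * q0 = 0 := star_comm_proj hq0p hzp proj_zero hqz
  have hzq' : z * q = (z * W) * star (z * W) := by
    have e : q = q0 + W * star W := by rw [hq0]; abel
    rw [e, mul_add, hzq, zero_add, star_mul, hzp.2, ← hzc.2.2 _ (star_mem hWM : star W ∈ M),
      mul_assoc z W, ← mul_assoc W z, ← hzc.2.2 W hWM, mul_assoc z W, ← mul_assoc z z, hzp.1]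
  have hT1 : IsTauFiniteProjection M τ (z * R') := by
    refine tf_of_le hτ hR' (mul_mem hzM hR'.1) (proj_mul hzp hR'.2.1 (hzc.2.2 _ hR'.1)) ?_
    rw [hzc.2.2 _ hR'.1, ← mul_assoc, hR'.2.1.1]
  have hT2 : IsTauFiniteProjection M τ (z * q) := by
    refine ⟨mul_mem hzM hqM, proj_mul hzp hqp (hzc.2.2 _ hqM), ?_⟩
    rw [hzq', ← hτ.tracial _ (mul_mem hzM hWM)]
    have hWW : IsTauFiniteProjection M τ (star W * W) :=
      tf_of_le hτ hf (mul_mem (star_mem hWM) hWM) hWp hfW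
    refine lt_of_le_of_lt (tau_mono hτ (mul_mem (star_mem (mul_mem hzM hWM)) (mul_mem hzM hWM))
      hWW.1 (star_mul_self_nonneg _) ?_) hWW.2.2
    have := star_left_conjugate_nonneg (proj_nonneg (proj_one_sub hzp)) W
    rw [← sub_nonneg]
    convert this using 1
    rw [star_mul, hzp.2, mul_assoc (star W) z, ← mul_assoc z z, hzp.1, mul_sub, sub_mul,
      mul_one, mul_assoc]
  have hsum : z * E = z * R' + z * q := by rw [hq, mul_sub]; abel
  have hRq' : R' * q = 0 := by
    rw [hq, mul_sub, hR'.2.1.1, star_comm_proj hE' hR'.2.1 hR'.2.1 hER, sub_self]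
  have hzE : z * E = 0 := by
    apply hz z hzc
    rw [hsum]
    apply tf_add hτ hT1 hT2
    rw [hzc.2.2 _ hR'.1, mul_assoc, ← mul_assoc z z, hzp.1, hzc.2.2 _ hqM, ← mul_assoc, hRq',
      zero_mul]
  have hEf0 : E * f0 = f0 := by
    have : f * f0 = f0 := star_comm_proj hf0p hf.2.1 hf0p hff0
    rw [← this, ← mul_assoc, hEf]
  have hf00 : f0 = 0 := by
    rw [← hzf, ← hEf0, ← mul_assoc, hzE, zero_mul]
  refine ⟨W, hWM, (sub_eq_zero.1 hf00).symm, ?_, ?_⟩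
  · rw [← hqW, ← mul_assoc, hEq]
  · rw [← hqW, ← mul_assoc, hRq, zero_mul]

end base

/-- The properties of the abelian algebra `WZ*(α)` which are used below. -/
structure GoodC (M : VonNeumannAlgebra H) (τ : (H →L[ℂ] H) → ENNReal) (C : Set (H →L[ℂ] H)) :
    Prop where
  sub : ∀ x ∈ C, x ∈ M
  comm : ∀ x ∈ C, ∀ y ∈ C, x * y = y * x
  mul : ∀ x ∈ C, ∀ y ∈ C, x * y ∈ C
  one : (1 : H →L[ℂ] H) ∈ C
  compl : ∀ x ∈ C, 1 - x ∈ C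
  central : ∀ z ∈ centerSet M, z ∈ C
  triv : ∀ x ∈ C, IsTauFiniteProjection M τ x → x = 0

section base
variable {M : VonNeumannAlgebra H} {τ : (H →L[ℂ] H) → ENNReal} (hτ : IsFNSTrace M τ)
include hτ

lemma goodC_WZ {n : ℕ} {α : Fin n → (H →L[ℂ] H)} (hα : IsCommutingSelfAdjointTuple M α)
    (htriv : ∀ x ∈ WZstar M (Set.range α), IsFiniteProjection M x → x = 0) :
    GoodC M τ (WZstar M (Set.range α)) := by
  have hSM : ∀ x ∈ Set.range α ∪ centerSet M, x ∈ M := by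
    rintro x (⟨i, rfl⟩ | hx)
    · exact hα.1 i
    · exact hx.1
  have hSS : Set.range α ∪ centerSet M ⊆ Set.centralizer (Set.range α ∪ centerSet M) := by
    rintro x (⟨i, rfl⟩ | hx)
    · rintro y (⟨j, rfl⟩ | hy)
      · exact hα.2.2 j i
      · exact hy.2 _ (hα.1 i)
    · intro y hy
      exact (hx.2 y (hSM y hy)).symm
  refine ⟨?_, ?_, ?_, ?_, ?_, ?_, ?_⟩
  · intro x hx
    apply mem_of_commutant
    intro y hy
    exact hx y (fun s hs => (comm_of_commutant (hSM s hs) hy).symm)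
  · intro x hx y hy
    exact hy x (Set.centralizer_subset hSS hx)
  · intro x hx y hy
    exact Set.mul_mem_centralizer hx hy
  · exact Set.one_mem_centralizer
  · intro x hx y hy
    rw [mul_sub, sub_mul, hx y hy, mul_one, one_mul]
  · intro z hz y hy
    exact (hy z (Or.inr hz)).symm
  · intro x hx h
    exact htriv x hx (tf_finite hτ h)

omit hτ in
lemma mem_WZ {n : ℕ} {α : Fin n → (H →L[ℂ] H)} {e : H →L[ℂ] H} (i : Fin n)
    (he : ∀ y, y * α i = α i * y → y * e = e * y) : e ∈ WZstar M (Set.range α) := by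
  intro y hy
  exact he y (hy (α i) (Or.inl ⟨i, rfl⟩)).symm

/-- Embedding a `τ`-finite projection, commuting with finitely many projections of `C`. -/
lemma exists_embed_comm {C : Set (H →L[ℂ] H)} (hC : GoodC M τ C) {R : H →L[ℂ] H}
    (hR : IsTauFiniteProjection M τ R) (F : Finset (H →L[ℂ] H)) :
    ∀ (_ : ∀ e ∈ F, e ∈ C ∧ IsProjection e) (E f : H →L[ℂ] H) (_ : E ∈ C) (_ : IsProjection E)
      (_ : IsTauFiniteProjection M τ f) (_ : E * f = f) (_ : ∀ e ∈ F, e * f = f * e),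
    ∃ w ∈ M, star w * w = f ∧ E * w = w ∧ R * w = 0 ∧ ∀ e ∈ F, e * w = w * e := by
  classical
  induction F using Finset.induction_on with
  | empty =>
    intro _ E f hE hE' hf hEf _
    obtain ⟨w, hw, h1, h2, h3⟩ := exists_embed hτ (hC.sub E hE) hE' (fun z hz h =>
      hC.triv _ (hC.mul _ (hC.central z hz.2) _ hE) h) hf hEf hR
    exact ⟨w, hw, h1, h2, h3, by simp⟩
  | insert e F heF ih =>
    intro hF E f hE hE' hf hEf hc
    have ih' := ih (fun g hg => hF g (Finset.mem_insert_of_mem hg))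
    have half : ∀ e : H →L[ℂ] H, e ∈ C → IsProjection e → e * f = f * e →
        ∃ w ∈ M, star w * w = f * e ∧ E * w = w ∧ e * w = w ∧ w * e = w ∧ R * w = 0 ∧
          ∀ g ∈ F, g * w = w * g := by
      intro e he he' hef
      have hcE := hC.comm E hE e he
      have hfe : IsTauFiniteProjection M τ (f * e) :=
        tf_of_le hτ hf (mul_mem hf.1 (hC.sub e he)) (proj_mul hf.2.1 he' hef.symm)
          (by rw [← mul_assoc, hf.2.1.1])
      obtain ⟨w, hw, h1, h2, h3, h4⟩ := ih' (E * e) (f * e) (hC.mul _ hE _ he)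
        (proj_mul hE' he' hcE) hfe
        (by rw [← hef, mul_assoc, ← mul_assoc e e, he'.1, hef, ← mul_assoc, hEf])
        (fun g hg => by
          rw [← mul_assoc, hc g (Finset.mem_insert_of_mem hg), mul_assoc, mul_assoc,
            hC.comm _ (hF g (Finset.mem_insert_of_mem hg)).1 e he])
      refine ⟨w, hw, h1, ?_, ?_, ?_, h3, h4⟩
      · rw [← h2, ← mul_assoc, ← mul_assoc, hE'.1]
      · rw [← h2, hcE, ← mul_assoc, ← mul_assoc, he'.1]
      · have := pi_eq (w := w) (by rw [h1]; exact hfe.2.1)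
        rw [mul_assoc, h1] at this
        rw [← this, mul_assoc, mul_assoc, he'.1]
    have he := hF e (Finset.mem_insert_self _ _)
    have hef := hc e (Finset.mem_insert_self _ _)
    obtain ⟨w, hw, a1, a2, a3, a4, a5, a6⟩ := half e he.1 he.2 hef
    obtain ⟨u, hu, b1, b2, b3, b4, b5, b6⟩ := half (1 - e) (hC.compl _ he.1) (proj_one_sub he.2)
      (by rw [sub_mul, mul_sub, hef, one_mul, mul_one])
    have heu : e * u = 0 := by
      rw [sub_mul, one_mul, sub_eq_self] at b3
      exact b3
    have hue : u * e = 0 := by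
      rw [mul_sub, mul_one, sub_eq_self] at b4
      exact b4
    have hwu : star w * u = 0 := by
      rw [← a3, star_mul, he.2.2, mul_assoc, heu, mul_zero]
    have huw : star u * w = 0 := by
      have := congrArg star hwu
      simpa using this
    refine ⟨w + u, add_mem hw hu, ?_, ?_, ?_, ?_⟩
    · rw [star_add, add_mul, mul_add, mul_add, hwu, huw, a1, b1, mul_sub, mul_one]
      abel
    · rw [mul_add, a2, b2]
    · rw [mul_add, a5, b5, add_zero]
    · intro g hg
      rcases Finset.mem_insert.1 hg with rfl | hg
      · rw [mul_add, add_mul, a3, a4, heu, hue]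
      · rw [mul_add, add_mul, a6 g hg, b6 g hg]

/-- σ-finiteness gives an exhausting sequence of `τ`-finite projections. -/
lemma exists_seq (hσ : SigmaFinite M) : ∃ p : ℕ → (H →L[ℂ] H),
    (∀ k, IsTauFiniteProjection M τ (p k)) ∧ ∀ y : H →L[ℂ] H, (∀ k, y * p k = p k) → y = 1 := by
  obtain ⟨S, hS1, hS2, hS3⟩ := exists_max_family
    (fun w : H →L[ℂ] H => IsTauFiniteProjection M τ w ∧ w ≠ 0)
    (fun w w' => w * w' = 0)
  have hcount : S.Countable := hσ S (fun p hp => ⟨(hS1 p hp).1.1, (hS1 p hp).1.2.1, (hS1 p hp).2⟩)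
    hS2
  have hst : ∀ i : S, star (i : H →L[ℂ] H) = i := fun i => (hS1 i i.2).1.2.1.2
  have hid : ∀ i : S, (i : H →L[ℂ] H) * i = i := fun i => (hS1 i i.2).1.2.1.1
  obtain ⟨W, hWM, hsum, hA, hB, hWp, hL, hRt⟩ := strong_sum (M := M)
    (w := fun i : S => (i : H →L[ℂ] H))
    (fun i => (hS1 i i.2).1.1)
    (fun i j hij => by
      rw [hst i]; exact hS2 i i.2 j j.2 (fun h => hij (Subtype.ext h)))
    (fun i j hij => by
      rw [hst j]; exact hS2 i i.2 j j.2 (fun h => hij (Subtype.ext h)))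
    (fun i => by rw [hst i, hid i]; exact (hS1 i i.2).1.2.1)
  have hWi : ∀ i : S, W * (i : H →L[ℂ] H) = i := fun i => by
    have := hA i; rwa [hst i, hid i] at this
  have hiW : ∀ i : S, (i : H →L[ℂ] H) * W = i := fun i => by
    have := hB i; rwa [hst i, hid i] at this
  have hWW : W * W = W := by
    have := hL W 1 (fun i => by rw [hWi, one_mul])
    rwa [one_mul] at this
  have hsW : star W * W = W := by
    have := hL (star W) 1 (fun i => by
      have := congrArg star (hiW i)
      rw [star_mul, hst i] at this
      rw [this, one_mul])
    rwa [one_mul] at this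
  have hWP : IsProjection W := by rw [hsW] at hWp; exact hWp
  have hW1 : W = 1 := by
    by_contra hne
    obtain ⟨e, he, he0, hqe⟩ := exists_tf_sub hτ (q := 1 - W) (sub_mem (one_mem M) hWM)
      (proj_one_sub hWP) (fun h => hne (sub_eq_zero.1 h).symm)
    have hie : ∀ i : S, (i : H →L[ℂ] H) * e = 0 := by
      intro i
      rw [← hqe, ← mul_assoc, mul_sub, mul_one, hiW i, sub_self, zero_mul]
    have hei : ∀ i : S, e * (i : H →L[ℂ] H) = 0 := by
      intro i
      exact star_comm_proj (hS1 i i.2).1.2.1 he.2.1 proj_zero (hie i)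
    have heS : e ∈ S := hS3 e ⟨he, he0⟩ (fun w hw => ⟨hei ⟨w, hw⟩, hie ⟨w, hw⟩⟩)
    have := hie ⟨e, heS⟩
    rw [he.2.1.1] at this
    exact he0 this
  have key : ∀ y : H →L[ℂ] H, (∀ i : S, y * (i : H →L[ℂ] H) = i) → y = 1 := by
    intro y hy
    have := hL y 1 (fun i => by rw [hy, one_mul])
    rwa [hW1, mul_one, mul_one] at this
  rcases S.eq_empty_or_nonempty with rfl | hne
  · exact ⟨fun _ => 0, fun _ => tf_zero hτ, fun y _ => key y (fun i => i.2.elim)⟩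
  · obtain ⟨p, hp⟩ := hcount.exists_eq_range hne
    refine ⟨p, fun k => (hS1 _ (hp ▸ ⟨k, rfl⟩)).1, fun y hy => key y ?_⟩
    rintro ⟨i, hi⟩
    rw [hp] at hi
    obtain ⟨k, rfl⟩ := hi
    exact hy k

end base

section base
variable {M : VonNeumannAlgebra H} {τ : (H →L[ℂ] H) → ENNReal} (hτ : IsFNSTrace M τ)
include hτ

omit hτ in
/-- Increasing finite families of spectral projections approximating `α`. -/
lemma exists_levels {n : ℕ} {α : Fin n → (H →L[ℂ] H)} (hα : IsCommutingSelfAdjointTuple M α) :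
    ∃ F : ℕ → Finset (H →L[ℂ] H), (∀ k, ∀ e ∈ F k, e ∈ WZstar M (Set.range α) ∧ IsProjection e) ∧
      Monotone F ∧ ∀ k i (y : H →L[ℂ] H), (∀ e ∈ F k, y * e = e * y) → ‖y‖ ≤ 1 →
        ‖y * α i - α i * y‖ ≤ 2 * (1 / 2) ^ k := by
  classical
  have h := fun (k : ℕ) (i : Fin n) => exists_approx (hα.2.1 i) (ε := (1 / 2 : ℝ) ^ k)
    (by positivity)
  choose G d hG hd hn using h
  refine ⟨fun k => (Finset.range (k + 1)).biUnion fun l => Finset.univ.biUnion fun i => G l i,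
    ?_, ?_, ?_⟩
  · intro k e he
    simp only [Finset.mem_biUnion] at he
    obtain ⟨l, -, i, -, he⟩ := he
    exact ⟨mem_WZ i (hG l i e he).2, (hG l i e he).1⟩
  · intro k l hkl
    apply Finset.biUnion_subset_biUnion_of_subset_left
    intro a ha
    simp only [Finset.mem_range] at ha ⊢
    omega
  · intro k i y hy hy1
    have hc : y * d k i = d k i * y := hd k i y (fun e he => hy e (by
      simp only [Finset.mem_biUnion]
      exact ⟨k, by simp, i, by simp, he⟩))
    have e : y * α i - α i * y = y * (α i - d k i) - (α i - d k i) * y := by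
      rw [mul_sub, sub_mul, hc]; abel
    have hpos : (0 : ℝ) ≤ (1 / 2) ^ k := by positivity
    rw [e]
    calc _ ≤ ‖y * (α i - d k i)‖ + ‖(α i - d k i) * y‖ := norm_sub_le _ _
      _ ≤ ‖y‖ * ‖α i - d k i‖ + ‖α i - d k i‖ * ‖y‖ := add_le_add (norm_mul_le _ _) (norm_mul_le _ _)
      _ ≤ 1 * (1 / 2) ^ k + (1 / 2) ^ k * 1 := by
        have := hn k i
        gcongr
      _ = _ := by ring

lemma exists_P {C : Set (H →L[ℂ] H)} (hC : GoodC M τ C) (F : ℕ → Finset (H →L[ℂ] H))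
    (hF : ∀ k, ∀ e ∈ F k, e ∈ C ∧ IsProjection e) (p : ℕ → (H →L[ℂ] H))
    (hp : ∀ k, IsTauFiniteProjection M τ (p k)) :
    ∃ P : ℕ → (H →L[ℂ] H), (∀ k, IsTauFiniteProjection M τ (P k)) ∧
      (∀ k l, k ≤ l → P l * P k = P k) ∧ (∀ k, P k * p k = p k) ∧
      ∀ k, ∀ e ∈ F k, e * P k = P k * e := by
  have step : ∀ (k : ℕ) (Q : {Q // IsTauFiniteProjection M τ Q}),
      ∃ Q' : {Q // IsTauFiniteProjection M τ Q}, Q'.1 * Q.1 = Q.1 ∧ Q'.1 * p k = p k ∧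
        ∀ e ∈ F k, e * Q'.1 = Q'.1 * e := by
    rintro k ⟨Q, hQ⟩
    obtain ⟨s, hs, h1, h2⟩ := tf_join hτ hQ (hp k)
    obtain ⟨P, hP, h3, h4⟩ := tf_comm_finset hτ (F k)
      (fun e he => ⟨hC.sub _ (hF k e he).1, (hF k e he).2⟩)
      (fun e he e' he' => hC.comm _ (hF k e he).1 _ (hF k e' he').1) hs
    refine ⟨⟨P, hP⟩, ?_, ?_, h4⟩
    · change P * Q = Q
      rw [← h1, ← mul_assoc, h3]
    · change P * p k = p k
      rw [← h2, ← mul_assoc, h3]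
  choose g hg1 hg2 hg3 using step
  let Q : ℕ → {Q // IsTauFiniteProjection M τ Q} := fun k =>
    Nat.rec (g 0 ⟨0, tf_zero hτ⟩) (fun m R => g (m + 1) R) k
  have hQs : ∀ k, Q (k + 1) = g (k + 1) (Q k) := fun k => rfl
  have hQ0 : Q 0 = g 0 ⟨0, tf_zero hτ⟩ := rfl
  refine ⟨fun k => (Q k).1, fun k => (Q k).2, ?_, ?_, ?_⟩
  · intro k l hkl
    induction l, hkl using Nat.le_induction with
    | base => exact (Q k).2.2.1.1
    | succ l hl ih =>
      change (Q (l + 1)).1 * (Q k).1 = (Q k).1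
      have ih' : (Q l).1 * (Q k).1 = (Q k).1 := ih
      rw [← ih', ← mul_assoc, hQs, hg1]
  · rintro (_ | k)
    · exact hg2 _ _
    · exact hg2 _ _
  · rintro (_ | k)
    · exact hg3 _ _
    · exact hg3 _ _

lemma exists_w {C : Set (H →L[ℂ] H)} (hC : GoodC M τ C) (G : ℕ → Finset (H →L[ℂ] H))
    (hG : ∀ k, ∀ e ∈ G k, e ∈ C ∧ IsProjection e) (f : ℕ → (H →L[ℂ] H))
    (hf : ∀ k, IsTauFiniteProjection M τ (f k)) (hfG : ∀ k, ∀ e ∈ G k, e * f k = f k * e) :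
    ∃ w : ℕ → (H →L[ℂ] H), (∀ k, w k ∈ M) ∧ (∀ k, star (w k) * w k = f k) ∧
      (∀ k l, k ≠ l → star (w k) * w l = 0) ∧ ∀ k, ∀ e ∈ G k, e * w k = w k * e := by
  have step : ∀ (k : ℕ) (R : {Q // IsTauFiniteProjection M τ Q}), ∃ w ∈ M,
      star w * w = f k ∧ R.1 * w = 0 ∧ ∀ e ∈ G k, e * w = w * e := by
    rintro k ⟨R, hR⟩
    obtain ⟨w, hw, h1, -, h2, h3⟩ := exists_embed_comm hτ hC hR (G k) (hG k) 1 (f k) hC.one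
      ⟨by simp, by simp⟩ (hf k) (one_mul _) (hfG k)
    exact ⟨w, hw, h1, h2, h3⟩
  choose g hg0 hg1 hg2 hg3 using step
  have hnext : ∀ (k : ℕ) (R : {Q // IsTauFiniteProjection M τ Q}),
      IsTauFiniteProjection M τ (R.1 + g k R * star (g k R)) := by
    intro k R
    apply tf_add hτ R.2
    · refine ⟨mul_mem (hg0 k R) (star_mem (hg0 k R)), pi_star ?_, ?_⟩
      · rw [hg1]; exact (hf k).2.1
      · rw [← hτ.tracial _ (hg0 k R), hg1]; exact (hf k).2.2
    · rw [← mul_assoc, hg2, zero_mul]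
  let Q : ℕ → {Q // IsTauFiniteProjection M τ Q} := fun k =>
    Nat.rec ⟨0, tf_zero hτ⟩ (fun m R => ⟨_, hnext m R⟩) k
  have hQs : ∀ k, (Q (k + 1)).1 = (Q k).1 + g k (Q k) * star (g k (Q k)) := fun k => rfl
  have hsR : ∀ k, star (g k (Q k)) * (Q k).1 = 0 := by
    intro k
    have := congrArg star (hg2 k (Q k))
    rwa [star_mul, (Q k).2.2.1.2, star_zero] at this
  have inv : ∀ k l, k < l → (Q l).1 * g k (Q k) = g k (Q k) := by
    intro k l hkl
    induction l, hkl using Nat.le_induction with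
    | base =>
      rw [hQs, add_mul, hg2, zero_add]
      exact pi_eq (by rw [hg1]; exact (hf k).2.1)
    | succ l hl ih =>
      rw [hQs, add_mul, ih, mul_assoc]
      nth_rewrite 2 [← ih]
      rw [← mul_assoc (star _), hsR, zero_mul, mul_zero, add_zero]
  have orth : ∀ k l, k < l → star (g l (Q l)) * g k (Q k) = 0 := by
    intro k l hkl
    rw [← inv k l hkl, ← mul_assoc, hsR, zero_mul]
  refine ⟨fun k => g k (Q k), fun k => hg0 _ _, fun k => hg1 _ _, ?_, fun k => hg3 _ _⟩
  intro k l hkl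
  rcases lt_or_gt_of_ne hkl with h | h
  · have := congrArg star (orth k l h)
    simpa using this
  · exact orth l k h

end base

section base
variable {M : VonNeumannAlgebra H} {τ : (H →L[ℂ] H) → ENNReal} (hτ : IsFNSTrace M τ)
include hτ

/-- `x` has `τ`-finite left support. -/
def FinSupp (M : VonNeumannAlgebra H) (τ : (H →L[ℂ] H) → ENNReal) : Set (H →L[ℂ] H) :=
  {x | x ∈ M ∧ ∃ p, IsTauFiniteProjection M τ p ∧ p * x = x}

lemma finSupp_zero : (0 : H →L[ℂ] H) ∈ FinSupp M τ :=
  ⟨zero_mem M, 0, tf_zero hτ, by simp⟩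

lemma finSupp_add {x y : H →L[ℂ] H} (hx : x ∈ FinSupp M τ) (hy : y ∈ FinSupp M τ) :
    x + y ∈ FinSupp M τ := by
  obtain ⟨hxM, p, hp, hpx⟩ := hx
  obtain ⟨hyM, q, hq, hqy⟩ := hy
  obtain ⟨s, hs, h1, h2⟩ := tf_join hτ hp hq
  refine ⟨add_mem hxM hyM, s, hs, ?_⟩
  rw [mul_add]
  nth_rewrite 1 [← hpx]
  nth_rewrite 1 [← hqy]
  rw [← mul_assoc, ← mul_assoc, h1, h2, hpx, hqy]

lemma finSupp_right {x f : H →L[ℂ] H} (hf : IsTauFiniteProjection M τ f) (hx : x ∈ M)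
    (h : x * f = x) : x ∈ FinSupp M τ := by
  obtain ⟨r, hr, hrx⟩ := tf_range hτ hf hx h
  exact ⟨hx, r, hr, hrx.2.1⟩

lemma exists_v {w f : ℕ → (H →L[ℂ] H)} {n : ℕ} {α : Fin n → (H →L[ℂ] H)} {b : ℕ → ℝ} {B : ℝ}
    (hα : ∀ i, α i ∈ M)
    (hw : ∀ k, w k ∈ M) (hf : ∀ k, IsTauFiniteProjection M τ (f k))
    (hwf : ∀ k, star (w k) * w k = f k) (hww : ∀ k l, k ≠ l → star (w k) * w l = 0)
    (hff : ∀ k l, k ≠ l → f k * f l = 0)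
    (h1 : ∀ y : H →L[ℂ] H, (∀ k, y * f k = f k) → y = 1)
    (hb : HasSum b B) (hcb : ∀ k i, ‖w k * α i - α i * w k‖ ≤ b k) :
    ∃ V ∈ M, star V * V = 1 ∧
      (∀ y z : H →L[ℂ] H, (∀ k, y * w k = z * w k) → y * V = z * V) ∧
      (∀ i, V * α i - α i * V ∈ Kideal M τ) ∧ ∀ i, ‖V * α i - α i * V‖ ≤ B := by
  have hp : ∀ k, IsProjection (star (w k) * w k) := fun k => by rw [hwf]; exact (hf k).2.1
  have hwfk : ∀ k, w k * f k = w k := fun k => by rw [← hwf, ← mul_assoc]; exact pi_eq (hp k)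
  have hsw : ∀ k, f k * star (w k) = star (w k) := fun k => by
    have := congrArg star (hwfk k)
    rwa [star_mul, (hf k).2.1.2] at this
  obtain ⟨V, hVM, hsum, hA, hB, -, hL, -⟩ := strong_sum (M := M) (w := w) hw hww
    (fun k l hkl => by
      rw [← hwfk k, ← hsw l, mul_assoc, ← mul_assoc (f k), hff k l hkl, zero_mul, mul_zero]) hp
  refine ⟨V, hVM, ?_, hL, ?_⟩
  · apply h1
    intro k
    have e1 : V * f k = w k := by
      rw [← hwf, ← mul_assoc, hA, pi_eq (hp k)]
    have e2 : star V * w k = f k := by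
      have := congrArg star (hB k)
      rwa [star_mul, star_star, hwf, (hf k).2.1.2] at this
    rw [mul_assoc, e1, e2]
  · have hS : ∀ i, HasSum (fun k => w k * α i - α i * w k) (V * α i - α i * V) := by
      intro i
      have hs : Summable (fun k => w k * α i - α i * w k) :=
        Summable.of_norm_bounded hb.summable (fun k => hcb k i)
      obtain ⟨D, hD⟩ := hs
      have : D = V * α i - α i * V := by
        ext ξ
        have a1 : HasSum (fun k => (w k * α i - α i * w k) ξ) (D ξ) :=
          hD.map (AddMonoidHom.mk' (fun T : H →L[ℂ] H => T ξ) (fun _ _ => rfl))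
            (ContinuousLinearMap.apply ℂ H ξ).continuous
        have a2 : HasSum (fun k => (w k * α i - α i * w k) ξ) ((V * α i - α i * V) ξ) := by
          have h3 := (hsum ξ).map (α i : H →ₗ[ℂ] H) (α i).continuous
          exact (hsum (α i ξ)).sub h3
        exact a1.unique a2
      rw [← this]; exact hD
    refine ⟨fun i => ?_, fun i => ?_⟩
    · refine mem_closure_of_tendsto (hS i) (Eventually.of_forall fun s => ?_)
      change _ ∈ FinSupp M τ
      refine Finset.sum_induction _ (· ∈ FinSupp M τ) (fun _ _ => finSupp_add hτ)
        (finSupp_zero hτ) ?_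
      intro k _
      rw [sub_eq_add_neg]
      apply finSupp_add hτ
      · obtain ⟨-, r, hr, hrw⟩ := finSupp_right hτ (hf k) (hw k) (hwfk k)
        exact ⟨mul_mem (hw k) (hα i), r, hr, by rw [← mul_assoc, hrw]⟩
      · refine finSupp_right hτ (hf k) (neg_mem (mul_mem (hα i) (hw k))) ?_
        rw [neg_mul, mul_assoc, hwfk]
    · rw [← (hS i).tsum_eq]
      exact tsum_of_norm_bounded hb (fun k => hcb k i)

end base

/-- The main construction. -/
theorem main (M : VonNeumannAlgebra H) (hσ : SigmaFinite M)
    (τ : (H →L[ℂ] H) → ENNReal) (hτ : IsFNSTrace M τ)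
    (n : ℕ) (hn : 0 < n) (α : Fin n → (H →L[ℂ] H))
    (hα : IsCommutingSelfAdjointTuple M α)
    (htriv : ∀ x ∈ WZstar M (Set.range α), IsFiniteProjection M x → x = 0) :
    ∃ v : ℕ → (H →L[ℂ] H),
      (∀ j, v j ∈ M) ∧
      (∀ j₁ j₂, star (v j₁) * v j₂ = if j₁ = j₂ then 1 else 0) ∧
      (∀ j i, v j * α i - α i * v j ∈ Kideal M τ) ∧
      Filter.Tendsto (fun j => commNorm α (v j)) Filter.atTop (nhds 0) := by
  have hC := goodC_WZ hτ hα htriv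
  obtain ⟨p, hp, hp1⟩ := exists_seq hτ hσ
  obtain ⟨F, hF, hFm, hFα⟩ := exists_levels hα
  obtain ⟨P, hP, hPm, hPp, hPF⟩ := exists_P hτ hC F hF p hp
  have hPm' : ∀ k l, k ≤ l → P k * P l = P k := fun k l h =>
    star_comm_proj (hP l).2.1 (hP k).2.1 (hP k).2.1 (hPm k l h)
  let ff : ℕ → ℕ → (H →L[ℂ] H) := fun j k =>
    Nat.casesOn k (P j) (fun k => P (j + k + 1) - P (j + k))
  have ff0 : ∀ j, ff j 0 = P j := fun _ => rfl
  have ffs : ∀ j k, ff j (k + 1) = P (j + k + 1) - P (j + k) := fun _ _ => rfl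
  have hff : ∀ j k, IsTauFiniteProjection M τ (ff j k) := by
    rintro j (_ | k)
    · exact hP j
    · rw [ffs]
      have hle : j + k ≤ j + k + 1 := by omega
      refine tf_of_le hτ (hP (j + k + 1)) (sub_mem (hP _).1 (hP _).1)
        (proj_sub (hP _).2.1 (hP _).2.1 (hPm _ _ hle)) ?_
      rw [mul_sub, (hP _).2.1.1, hPm _ _ hle]
  -- position of the pieces relative to `P`
  have hge : ∀ j k m, j + k ≤ m → P m * ff j k = ff j k := by
    rintro j (_ | k) m hm
    · exact hPm _ _ (by omega)
    · rw [ffs, mul_sub, hPm _ _ (by omega), hPm _ _ (by omega)]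
  have hlt : ∀ j k m, m < j + k → j ≤ m → P m * ff j k = 0 := by
    rintro j (_ | k) m hm hj
    · omega
    · rw [ffs, mul_sub, hPm' _ _ (by omega), hPm' _ _ (by omega), sub_self]
  have horth' : ∀ j k l, k < l → ff j k * ff j l = 0 := by
    intro j k l hkl
    have e : ff j k * P (j + k) = ff j k :=
      star_comm_proj (hP _).2.1 (hff j k).2.1 (hff j k).2.1 (hge j k _ le_rfl)
    rw [← e, mul_assoc, hlt j l _ (by omega) (by omega), mul_zero]
  have horth : ∀ j k l, k ≠ l → ff j k * ff j l = 0 := by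
    intro j k l hkl
    rcases lt_or_gt_of_ne hkl with h | h
    · exact horth' j k l h
    · exact star_comm_proj (hff j l).2.1 (hff j k).2.1 proj_zero (horth' j l k h)
  have hone : ∀ j, ∀ y : H →L[ℂ] H, (∀ k, y * ff j k = ff j k) → y = 1 := by
    intro j y hy
    have hyP : ∀ k, y * P (j + k) = P (j + k) := by
      intro k
      induction k with
      | zero => exact hy 0
      | succ k ih =>
        have := hy (k + 1)
        rw [ffs, mul_sub, ih] at this
        exact sub_left_inj.1 this
    apply hp1
    intro m
    rw [← hPp m, ← hPm m (j + m) (by omega), ← mul_assoc, ← mul_assoc, hyP]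
  have hcomm : ∀ j k, ∀ e ∈ F (j + (k - 1)), e * ff j k = ff j k * e := by
    rintro j (_ | k) e he
    · exact hPF j e he
    · have he' : e ∈ F (j + k) := he
      rw [ffs, mul_sub, sub_mul, hPF _ e he', hPF _ e (hFm (by omega : j + k ≤ j + k + 1) he')]
  obtain ⟨w, hwM, hwf, hww, hwF⟩ := exists_w hτ hC
    (fun m => F (m.unpair.1 + (m.unpair.2 - 1))) (fun m => hF _)
    (fun m => ff m.unpair.1 m.unpair.2) (fun m => hff _ _) (fun m => hcomm _ _)
  have hw1 : ∀ m, ‖w m‖ ≤ 1 := fun m => pi_norm_le (by rw [hwf]; exact (hff _ _).2.1)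
  have hb : ∀ j k i, ‖w (Nat.pair j k) * α i - α i * w (Nat.pair j k)‖ ≤
      4 * (1 / 2) ^ j * (1 / 2) ^ k := by
    intro j k i
    have h := hwF (Nat.pair j k)
    simp only [Nat.unpair_pair] at h
    refine (hFα (j + (k - 1)) i _ (fun e he => (h e he).symm) (hw1 _)).trans ?_
    rw [pow_add]
    have hk : (1 / 2 : ℝ) ^ (k - 1) ≤ 2 * (1 / 2) ^ k := by
      rcases k with _ | k
      · norm_num
      · rw [Nat.add_sub_cancel, pow_succ]; linarith
    have hj : (0 : ℝ) ≤ (1 / 2) ^ j := by positivity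
    nlinarith
  have hv : ∀ j, ∃ V ∈ M, star V * V = 1 ∧
      (∀ y z : H →L[ℂ] H, (∀ k, y * w (Nat.pair j k) = z * w (Nat.pair j k)) → y * V = z * V) ∧
      (∀ i, V * α i - α i * V ∈ Kideal M τ) ∧
      ∀ i, ‖V * α i - α i * V‖ ≤ 4 * (1 / 2) ^ j * 2 := by
    intro j
    refine exists_v hτ (w := fun k => w (Nat.pair j k)) (f := ff j)
      (b := fun k => 4 * (1 / 2) ^ j * (1 / 2) ^ k) hα.1 (fun k => hwM _) (hff j) ?_ ?_
      (horth j) (hone j) (hasSum_geometric_two.mul_left _) (hb j)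
    · intro k
      have := hwf (Nat.pair j k)
      simpa only [Nat.unpair_pair] using this
    · intro k l hkl
      exact hww _ _ (fun h => hkl (Nat.pair_eq_pair.1 h).2)
  choose v hvM hv1 hvL hvK hvB using hv
  refine ⟨v, hvM, ?_, hvK, ?_⟩
  · intro j₁ j₂
    split_ifs with h
    · subst h; exact hv1 j₁
    · have a : ∀ k, star (w (Nat.pair j₂ k)) * v j₁ = 0 := by
        intro k
        have := hvL j₁ (star (w (Nat.pair j₂ k))) 0 (fun l => by
          rw [zero_mul]
          exact hww _ _ (fun h' => h (Nat.pair_eq_pair.1 h').1.symm))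
        rwa [zero_mul] at this
      have := hvL j₂ (star (v j₁)) 0 (fun k => by
        have := congrArg star (a k)
        rw [star_mul, star_star, star_zero] at this
        rw [this, zero_mul])
      rwa [zero_mul] at this
  · have : Nonempty (Fin n) := ⟨⟨0, hn⟩⟩
    have hlim : Tendsto (fun j : ℕ => (4 : ℝ) * (1 / 2) ^ j * 2) atTop (nhds 0) := by
      have := ((tendsto_pow_atTop_nhds_zero_of_lt_one (r := (1 / 2 : ℝ)) (by norm_num)
        (by norm_num)).const_mul 4).mul_const 2
      simpa using this
    refine squeeze_zero (fun j => ?_) (fun j => ?_) hlim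
    · exact Real.iSup_nonneg (fun i => norm_nonneg _)
    · exact ciSup_le (fun i => hvB j i)

end VNAux

open VNA in
/-- Existence of a sequence of isometries with pairwise orthogonal ranges
whose commutators with `α` lie in `K(M,τ)` and tend to `0` in norm. -/
theorem statement_14 {H : Type*} [NormedAddCommGroup H] [InnerProductSpace ℂ H]
    [CompleteSpace H] (M : VonNeumannAlgebra H)
    (hM : ProperlyInfinite M) (hσ : SigmaFinite M)
    (τ : (H →L[ℂ] H) → ENNReal) (hτ : IsFNSTrace M τ)
    (n : ℕ) (hn : 0 < n) (α : Fin n → (H →L[ℂ] H))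
    (hα : IsCommutingSelfAdjointTuple M α)
    (htriv : ∀ x ∈ WZstar M (Set.range α), IsFiniteProjection M x → x = 0) :
    ∃ v : ℕ → (H →L[ℂ] H),
      (∀ j, v j ∈ M) ∧
      (∀ j₁ j₂, star (v j₁) * v j₂ = if j₁ = j₂ then 1 else 0) ∧
      (∀ j i, v j * α i - α i * v j ∈ Kideal M τ) ∧
      Filter.Tendsto (fun j => commNorm α (v j)) Filter.atTop (nhds 0) := by
  exact VNAux.main M hσ τ hτ n hn α hα htriv
end
end

section
/- Let M be a properly infinite σ-finite von Neumann algebra with a faithful normal semifinite trace τ, and let α ∈ M^n (n ≥ 1) be a commuting self-adjoint n-tuple such that the only finite projection of M belonging to WZ*(α) is 0. Then for every ε > 0 there exists a diagonal n-tuple β ∈ M^n such that ‖β(j) − α(j)‖ ≤ ε for every 1 ≤ j ≤ n and the only finite projection of M belonging to WZ*(β) is 0. -/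
open ContinuousLinearMap Filter Topology

noncomputable section

section Helpers

variable {H : Type*} [NormedAddCommGroup H] [InnerProductSpace ℂ H] [CompleteSpace H]

/-- positive part of `a - c` -/
def fpos (a : H →L[ℂ] H) (c : ℝ) : H →L[ℂ] H := cfc (fun x : ℝ => max (x - c) 0) a

/-- negative part of `a - c` -/
def fneg (a : H →L[ℂ] H) (c : ℝ) : H →L[ℂ] H := cfc (fun x : ℝ => max (c - x) 0) a

/-- spectral projection of `a` for `(-∞, c]` -/
def sproj (a : H →L[ℂ] H) (c : ℝ) : H →L[ℂ] H :=
  (LinearMap.ker (fpos a c : H →ₗ[ℂ] H)).starProjection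

theorem sproj_star (a : H →L[ℂ] H) (c : ℝ) : star (sproj a c) = sproj a c := by
  haveI : CompleteSpace (LinearMap.ker (fpos a c : H →ₗ[ℂ] H)) :=
    (ContinuousLinearMap.isClosed_ker (fpos a c)).completeSpace_coe
  exact isSelfAdjoint_starProjection _

theorem mem_range_sproj (a : H →L[ℂ] H) (c : ℝ) (ξ : H) :
    fpos a c (sproj a c ξ) = 0 := by
  have h : sproj a c ξ ∈ LinearMap.ker (fpos a c : H →ₗ[ℂ] H) :=
    Submodule.starProjection_apply_mem _ _
  simpa using h

theorem sproj_of_mem (a : H →L[ℂ] H) (c : ℝ) (ξ : H) (h : fpos a c ξ = 0) :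
    sproj a c ξ = ξ := by
  apply Submodule.starProjection_eq_self_iff.2
  simpa using h

theorem fpos_mul_sproj (a : H →L[ℂ] H) (c : ℝ) : fpos a c * sproj a c = 0 := by
  ext ξ; exact mem_range_sproj a c ξ

theorem sproj_mul_of (a : H →L[ℂ] H) (c : ℝ) (T : H →L[ℂ] H) (h : fpos a c * T = 0) :
    sproj a c * T = T := by
  ext ξ
  exact sproj_of_mem a c (T ξ) (by simpa using congrArg (fun S : H →L[ℂ] H => S ξ) h)

theorem sproj_idem (a : H →L[ℂ] H) (c : ℝ) : sproj a c * sproj a c = sproj a c :=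
  sproj_mul_of _ _ _ (fpos_mul_sproj a c)

theorem commute_fpos (a : H →L[ℂ] H) (c : ℝ) (T : H →L[ℂ] H) (h : T * a = a * T) :
    T * fpos a c = fpos a c * T := by
  have : Commute a T := h.symm
  exact (this.cfc_real _).symm

theorem sproj_mul_sproj_mul (a : H →L[ℂ] H) (c : ℝ) (T : H →L[ℂ] H) (h : T * a = a * T) :
    sproj a c * (T * sproj a c) = T * sproj a c := by
  apply sproj_mul_of
  rw [← mul_assoc, ← commute_fpos a c T h, mul_assoc, fpos_mul_sproj, mul_zero]

theorem commute_sproj (a : H →L[ℂ] H) (ha : star a = a) (c : ℝ) (T : H →L[ℂ] H)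
    (h : T * a = a * T) : T * sproj a c = sproj a c * T := by
  have h' : star T * a = a * star T := by
    have := congrArg star h
    simp only [star_mul, ha] at this
    exact this.symm
  have h1 := sproj_mul_sproj_mul a c T h
  have h2 := congrArg star (sproj_mul_sproj_mul a c (star T) h')
  simp only [star_mul, star_star, sproj_star] at h2
  rw [← h1, ← mul_assoc, h2]

theorem fpos_mul_fneg (a : H →L[ℂ] H) (c : ℝ) : fpos a c * fneg a c = 0 := by
  rw [fpos, fneg, ← cfc_mul _ _ a]
  rw [← cfc_const_zero ℝ a]
  congr 1
  ext x
  rcases le_total x c with h | h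
  · simp [max_eq_right (sub_nonpos.2 h)]
  · simp [max_eq_right (sub_nonpos.2 h)]

theorem fneg_star (a : H →L[ℂ] H) (c : ℝ) : star (fneg a c) = fneg a c :=
  (cfc_predicate (p := IsSelfAdjoint) (fun x : ℝ => max (c - x) 0) a : IsSelfAdjoint _)

theorem fneg_nonneg (a : H →L[ℂ] H) (c : ℝ) : 0 ≤ fneg a c :=
  cfc_nonneg (fun x _ => le_max_right _ _)

theorem fpos_nonneg (a : H →L[ℂ] H) (c : ℝ) : 0 ≤ fpos a c :=
  cfc_nonneg (fun x _ => le_max_right _ _)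

theorem fneg_mul_sproj (a : H →L[ℂ] H) (c : ℝ) : fneg a c * sproj a c = fneg a c := by
  have h := congrArg star (sproj_mul_of a c _ (fpos_mul_fneg a c))
  simpa only [star_mul, fneg_star, sproj_star] using h

theorem fpos_sub_fneg (a : H →L[ℂ] H) (ha : star a = a) (c : ℝ) :
    a - (c : ℂ) • 1 = fpos a c - fneg a c := by
  have ha' : IsSelfAdjoint a := ha
  rw [fpos, fneg, ← cfc_sub _ _ a]
  have : (fun x : ℝ => max (x - c) 0 - max (c - x) 0) = fun x => x - c := by
    ext x
    rcases le_total x c with h | h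
    · rw [max_eq_right (sub_nonpos.2 h), max_eq_left (sub_nonneg.2 h)]; ring
    · rw [max_eq_right (sub_nonpos.2 h), max_eq_left (sub_nonneg.2 h)]; ring
  rw [this, cfc_sub (fun x : ℝ => x) (fun _ => c) a, cfc_id' ℝ a, cfc_const c a]
  rw [Algebra.algebraMap_eq_smul_one]
  simp

theorem sproj_mono (a : H →L[ℂ] H) {c d : ℝ} (h : c ≤ d) :
    sproj a d * sproj a c = sproj a c := by
  rcases h.eq_or_lt with rfl | h
  · exact sproj_idem a c
  apply sproj_mul_of
  have hpos : ∀ x : ℝ, max (x - c) (d - c) ≠ 0 := fun x =>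
    ((sub_pos.2 h).trans_le (le_max_right _ _)).ne'
  have : fpos a d = cfc (fun x : ℝ => max (x - d) 0 / max (x - c) (d - c)) a * fpos a c := by
    have hcont : Continuous (fun x : ℝ => max (x - d) 0 / max (x - c) (d - c)) :=
      Continuous.div (by fun_prop) (by fun_prop) hpos
    rw [fpos, fpos, ← cfc_mul (fun x : ℝ => max (x - d) 0 / max (x - c) (d - c))
      (fun x : ℝ => max (x - c) 0) a hcont.continuousOn]
    congr 1
    ext x
    rcases le_total x d with h1 | h1
    · rw [max_eq_right (sub_nonpos.2 h1)]; simp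
    · rw [max_eq_left (sub_nonneg.2 h1), max_eq_left (by linarith : d - c ≤ x - c),
        max_eq_left (by linarith : 0 ≤ x - c)]
      rw [div_mul_cancel₀]
      linarith
  rw [this, mul_assoc, fpos_mul_sproj, mul_zero]

theorem sproj_mono' (a : H →L[ℂ] H) {c d : ℝ} (h : c ≤ d) :
    sproj a c * sproj a d = sproj a c := by
  simpa only [star_mul, sproj_star] using congrArg star (sproj_mono a h)

theorem sproj_eq_one (a : H →L[ℂ] H) (c : ℝ) (h : ∀ x ∈ spectrum ℝ a, x ≤ c) :
    sproj a c = 1 := by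
  have h0 : fpos a c = 0 := by
    rw [fpos, ← cfc_const_zero ℝ a]
    apply cfc_congr
    intro x hx
    exact max_eq_right (sub_nonpos.2 (h x hx))
  have := sproj_mul_of a c 1 (by rw [h0, zero_mul])
  rwa [mul_one] at this

theorem sproj_eq_zero (a : H →L[ℂ] H) (ha : star a = a) (c : ℝ)
    (h : ∀ x ∈ spectrum ℝ a, c + 1 ≤ x) : sproj a c = 0 := by
  have ha' : IsSelfAdjoint a := ha
  have hpos : ∀ x : ℝ, max (x - c) 1 ≠ 0 := fun x =>
    (zero_lt_one.trans_le (le_max_right _ _)).ne'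
  have h1 : cfc (fun x : ℝ => 1 / max (x - c) 1) a * fpos a c = 1 := by
    have hcont : Continuous (fun x : ℝ => 1 / max (x - c) 1) :=
      Continuous.div (by fun_prop) (by fun_prop) hpos
    rw [fpos, ← cfc_mul (fun x : ℝ => 1 / max (x - c) 1)
      (fun x : ℝ => max (x - c) 0) a hcont.continuousOn, ← cfc_const_one ℝ a]
    apply cfc_congr
    intro x hx
    have := h x hx
    simp only
    rw [max_eq_left (by linarith : 1 ≤ x - c), max_eq_left (by linarith : 0 ≤ x - c)]
    rw [div_mul_cancel₀]
    linarith
  rw [← one_mul (sproj a c), ← h1, mul_assoc, fpos_mul_sproj, mul_zero]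

theorem approx (a : H →L[ℂ] H) (ha : star a = a) (δ : ℝ) (hδ : 0 < δ) :
    ∃ (q : ℕ → H →L[ℂ] H) (lam : ℕ → ℂ) (N : ℕ),
      (∀ k, VNA.IsProjection (q k)) ∧ (∀ k l, k ≠ l → q k * q l = 0) ∧
      (∀ T, T * a = a * T → ∀ k, T * q k = q k * T) ∧
      (∀ k, N ≤ k → q k = 0) ∧
      ‖(∑ k ∈ Finset.range N, lam k • q k) - a‖ ≤ δ := by
  obtain ⟨R, hR⟩ : ∃ R : ℝ, ∀ x ∈ spectrum ℝ a, ‖x‖ ≤ R :=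
    (ContinuousFunctionalCalculus.isCompact_spectrum (R := ℝ) a).isBounded.exists_norm_le
  set c : ℕ → ℝ := fun k => -R - 1 + k * δ with hc
  have hcm : Monotone c := by
    intro i j hij
    have : (i : ℝ) ≤ j := by exact_mod_cast hij
    simp only [hc]
    nlinarith
  obtain ⟨N, hN⟩ : ∃ N : ℕ, R ≤ c N := by
    obtain ⟨N, hN⟩ := exists_nat_ge ((2 * R + 1) / δ)
    refine ⟨N, ?_⟩
    rw [div_le_iff₀ hδ] at hN
    simp only [hc]; linarith
  have hone : ∀ k, N ≤ k → sproj a (c k) = 1 := fun k hk =>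
    sproj_eq_one a _ fun x hx => (le_abs_self x).trans ((hR x hx).trans (hN.trans (hcm hk)))
  have hzero : sproj a (c 0) = 0 := by
    refine sproj_eq_zero a ha _ fun x hx => ?_
    have := (abs_le.1 (hR x hx)).1
    simp only [hc]; push_cast; linarith
  set q : ℕ → H →L[ℂ] H := fun k => sproj a (c (k + 1)) - sproj a (c k) with hq
  have hidem : ∀ k, q k * q k = q k := by
    intro k
    simp only [hq, mul_sub, sub_mul, sproj_idem, sproj_mono a (hcm (Nat.le_succ k)),
      sproj_mono' a (hcm (Nat.le_succ k))]
    abel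
  have hstar : ∀ k, star (q k) = q k := by
    intro k; simp only [hq, star_sub, sproj_star]
  have horth : ∀ k l, k < l → q k * q l = 0 := by
    intro k l hkl
    simp only [hq, mul_sub, sub_mul]
    rw [sproj_mono' a (hcm (by omega : k + 1 ≤ l + 1)), sproj_mono' a (hcm (by omega : k ≤ l + 1)),
      sproj_mono' a (hcm (by omega : k + 1 ≤ l)), sproj_mono' a (hcm (by omega : k ≤ l))]
    abel
  have hcomm : ∀ T, T * a = a * T → ∀ k, T * q k = q k * T := by
    intro T hT k
    simp only [hq, mul_sub, sub_mul, commute_sproj a ha _ T hT]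
  have hsum : ∑ k ∈ Finset.range N, q k = 1 := by
    rw [Finset.sum_range_sub (fun k => sproj a (c k)), hone N le_rfl, hzero, sub_zero]
  have hlow : ∀ k, (a - (c k : ℂ) • 1) * q k = star (q k) * fpos a (c k) * q k := by
    intro k
    have h1 : fneg a (c k) * q k = 0 := by
      rw [← fneg_mul_sproj a (c k), mul_assoc]
      simp only [hq, mul_sub, sproj_idem, sproj_mono' a (hcm (Nat.le_succ k)), sub_self, mul_zero]
    have h2 : fpos a (c k) * q k = q k * fpos a (c k) :=
      hcomm _ (commute_fpos a (c k) a rfl).symm k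
    rw [fpos_sub_fneg a ha, sub_mul, h1, sub_zero, hstar, ← h2, mul_assoc, hidem]
  have hupp : ∀ k, ((c (k + 1) : ℂ) • 1 - a) * q k = star (q k) * fneg a (c (k + 1)) * q k := by
    intro k
    have h1 : fpos a (c (k + 1)) * q k = 0 := by
      have : q k = sproj a (c (k + 1)) * q k := by
        simp only [hq, mul_sub, sproj_idem, sproj_mono a (hcm (Nat.le_succ k))]
      rw [this, ← mul_assoc, fpos_mul_sproj, zero_mul]
    have h2 : fneg a (c (k + 1)) * q k = q k * fneg a (c (k + 1)) := by
      refine hcomm _ ?_ k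
      exact ((Commute.refl a).cfc_real _)
    rw [← neg_sub, fpos_sub_fneg a ha, neg_mul, sub_mul, h1, zero_sub, neg_neg, hstar, ← h2,
      mul_assoc, hidem]
  refine ⟨q, fun k => (c k : ℂ), N, fun k => ⟨hidem k, hstar k⟩, ?_, hcomm, ?_, ?_⟩
  · intro k l hkl
    rcases hkl.lt_or_gt with h | h
    · exact horth k l h
    · simpa only [star_mul, star_zero, hstar] using congrArg star (horth l k h)
  · intro k hk
    simp only [hq, hone k hk, hone (k + 1) (by omega), sub_self]
  · have e1 : a - ∑ k ∈ Finset.range N, (c k : ℂ) • q k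
        = ∑ k ∈ Finset.range N, star (q k) * fpos a (c k) * q k := by
      conv_lhs => rw [← mul_one a, ← hsum, Finset.mul_sum, ← Finset.sum_sub_distrib]
      refine Finset.sum_congr rfl fun k _ => ?_
      rw [← hlow, sub_mul, smul_mul_assoc, one_mul]
    have e2 : algebraMap ℝ (H →L[ℂ] H) δ - (a - ∑ k ∈ Finset.range N, (c k : ℂ) • q k)
        = ∑ k ∈ Finset.range N, star (q k) * fneg a (c (k + 1)) * q k := by
      have e3 : algebraMap ℝ (H →L[ℂ] H) δ = (δ : ℂ) • (1 : H →L[ℂ] H) := by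
        rw [Algebra.algebraMap_eq_smul_one]; simp
      rw [e3]
      conv_lhs => rw [← mul_one a, ← hsum, Finset.mul_sum, ← Finset.sum_sub_distrib,
        Finset.smul_sum, ← Finset.sum_sub_distrib]
      refine Finset.sum_congr rfl fun k _ => ?_
      rw [← hupp, sub_mul, smul_mul_assoc, one_mul]
      have : (c (k + 1) : ℂ) = c k + δ := by
        simp only [hc]; push_cast; ring
      rw [this, add_smul]
      abel
    rw [norm_sub_rev]
    have hn : 0 ≤ a - ∑ k ∈ Finset.range N, (c k : ℂ) • q k := by
      rw [e1]
      exact Finset.sum_nonneg fun k _ => star_left_conjugate_nonneg (fpos_nonneg a _) _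
    rw [CStarAlgebra.norm_le_iff_le_algebraMap _ hδ.le hn, ← sub_nonneg, e2]
    exact Finset.sum_nonneg fun k _ => star_left_conjugate_nonneg (fneg_nonneg a _) _

end Helpers

open VNA in
/-- `α` can be approximated in the uniform norm by diagonal `n`-tuples
`β` with `WZ*(β)` containing no nonzero finite projection. -/
theorem statement_15 {H : Type*} [NormedAddCommGroup H] [InnerProductSpace ℂ H]
    [CompleteSpace H] (M : VonNeumannAlgebra H)
    (hM : ProperlyInfinite M) (hσ : SigmaFinite M)
    (τ : (H →L[ℂ] H) → ENNReal) (hτ : IsFNSTrace M τ)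
    (n : ℕ) (hn : 0 < n) (α : Fin n → (H →L[ℂ] H))
    (hα : IsCommutingSelfAdjointTuple M α)
    (htriv : ∀ x ∈ WZstar M (Set.range α), IsFiniteProjection M x → x = 0)
    (ε : ℝ) (hε : 0 < ε) :
    ∃ β : Fin n → (H →L[ℂ] H),
      (∀ j, β j ∈ M ∧ IsDiagonal M (β j)) ∧
      (∀ i j, β i * β j = β j * β i) ∧
      (∀ j, ‖β j - α j‖ ≤ ε) ∧
      (∀ x ∈ WZstar M (Set.range β), IsFiniteProjection M x → x = 0) := by
  obtain ⟨hαM, hαs, hαc⟩ := hα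
  choose q lam N hproj horth hcomm hzero hnorm using fun j => approx (α j) (hαs j) ε hε
  set β : Fin n → (H →L[ℂ] H) :=
    fun j => ∑ k ∈ Finset.range (N j), lam j k • q j k with hβ
  have hβc : ∀ j T, T * α j = α j * T → T * β j = β j * T := by
    intro j T hT
    simp only [hβ, Finset.mul_sum, Finset.sum_mul, mul_smul_comm, smul_mul_assoc]
    exact Finset.sum_congr rfl fun k _ => by rw [hcomm j T hT k]
  have hmem : ∀ (x : H →L[ℂ] H) (j), (∀ T, T * α j = α j * T → T * x = x * T) → x ∈ M := by
    intro x j hx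
    have : x ∈ Set.centralizer (Set.centralizer (M : Set (H →L[ℂ] H))) := by
      intro T hT
      exact hx T (hT (α j) (hαM j)).symm
    rwa [M.centralizer_centralizer] at this
  refine ⟨β, fun j => ⟨hmem _ j (hβc j), q j, lam j, fun k => hmem _ j fun T hT => hcomm j T hT k,
    hproj j, horth j, fun ξ => ?_⟩, ?_, hnorm, ?_⟩
  · have h1 : β j ξ = ∑ k ∈ Finset.range (N j), lam j k • (q j k ξ) := by
      simp [hβ]
    rw [h1]
    refine hasSum_sum_of_ne_finset_zero fun k hk => ?_
    rw [hzero j k (by simpa using hk)]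
    simp
  · intro i j
    exact hβc j _ (hβc i _ (hαc j i)).symm
  · intro x hx hfin
    refine htriv x ?_ hfin
    refine Set.centralizer_subset ?_ hx
    intro T hT y hy
    rcases hy with ⟨j, rfl⟩ | hy
    · exact (hβc j T (hT (α j) (Or.inl ⟨j, rfl⟩)).symm).symm
    · exact hT y (Or.inr hy)
end
end
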